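/- arXiv:1612.08698 — 6 statements merged into one kernel-verified Lean document; each statement's English description precedes it below -/
import Mathlib

section
/- For every integer d ≥ 0, there exist real numbers ε, δ > 0 as follows. Let G be a finite graph and let L be a list assignment for G in which every list has size d+2. If G is weakly d-degenerate, then there exists a probability distribution on L-colorings φ of G such that (i) for all v ∈ V(G) and c ∈ L(v), Prob[φ(v) = c] ≥ ε, and (ii) for every set S ⊆ V(G) with |S| ≤ d and every color c, Prob[φ(v) ≠ c for all v ∈ S] ≥ δ^|S|. -/
def IsLColoring {V : Type*} (G : SimpleGraph V) (L : V → Finset ℕ) (φ : V → ℕ) : Prop :=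
  (∀ v, φ v ∈ L v) ∧ ∀ ⦃u w : V⦄, G.Adj u w → φ u ≠ φ w

/-- `G` is weakly `d`-degenerate: every subgraph `G'` (with at least one vertex) either has
minimum degree at most `d`, or contains a set of `d+1` vertices of degree `d+1` (in `G'`)
inducing a connected subgraph. -/
def WeaklyDegenerate {V : Type*} (G : SimpleGraph V) (d : ℕ) : Prop :=
  ∀ H : G.Subgraph, H.verts.Nonempty →
    (∃ v ∈ H.verts, (H.neighborSet v).ncard ≤ d) ∨
    (∃ P : Finset V, ↑P ⊆ H.verts ∧ P.card = d + 1 ∧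
      (∀ v ∈ P, (H.neighborSet v).ncard = d + 1) ∧ (H.induce ↑P).Connected)

/-! Weak degeneracy lets one split off a set `P` of at most `d + 1` vertices, either a vertex of
degree at most `d` or a connected set of `d + 1` vertices of degree `d + 1`, and extend a random
list colouring of the rest to `P` uniformly at random. There are at most `(d + 2) ^ (d + 1)`
extensions, so it is enough to exhibit a single one with the desired property, which a greedy
argument does. To give `v ∈ P` the colour `c`, first ask that the at most `d` neighbours of `v`
outside `P` avoid `c`; by induction this happens with probability at least `δ ^ d`. To have `S`
avoid `c`, delete `c` from the lists on `S ∩ P`: because `#S ≤ d`, every nonempty subset of `P`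
has a vertex with fewer neighbours in it and outside `P` than colours left.

The bound on the neighbours of `v` fails for `d = 0`. In this case two list colourings that use both
colours of each list are built simultaneously. -/

open Finset Function
open scoped ENNReal NNReal

universe u v

section PMF

variable {Ω Ω' : Type*}

theorem toOuterMeasure_univ (μ : PMF Ω) : μ.toOuterMeasure Set.univ = 1 :=
  (μ.toOuterMeasure_apply_eq_one_iff _).mpr (Set.subset_univ _)

theorem inv_card_le_toOuterMeasure_uniformOfFinset {s : Finset Ω} (hs : s.Nonempty) {A : Set Ω}
    {a : Ω} (has : a ∈ s) (haA : a ∈ A) :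
    (#s : ℝ≥0∞)⁻¹ ≤ (PMF.uniformOfFinset s hs).toOuterMeasure A := by
  rw [← PMF.uniformOfFinset_apply_of_mem hs has, ← PMF.toOuterMeasure_apply_singleton]
  exact MeasureTheory.measure_mono (Set.singleton_subset_iff.mpr haA)

theorem mul_toOuterMeasure_le_bindOnSupport (μ : PMF Ω) (κ : ∀ a ∈ μ.support, PMF Ω')
    {A : Set Ω'} {B : Set Ω} {r : ℝ≥0∞}
    (h : ∀ a (ha : a ∈ μ.support), a ∈ B → r ≤ (κ a ha).toOuterMeasure A) :
    μ.toOuterMeasure B * r ≤ (μ.bindOnSupport κ).toOuterMeasure A := by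
  rw [PMF.toOuterMeasure_bindOnSupport_apply, PMF.toOuterMeasure_apply, ← ENNReal.tsum_mul_right]
  refine ENNReal.tsum_le_tsum fun a ↦ ?_
  by_cases haB : a ∈ B
  · rw [Set.indicator_of_mem haB]
    split_ifs with ha
    · simp [ha]
    · gcongr
      exact h a ha haB
  · simp [haB]

/-- The law of a uniformly random element of the finite set `E a`, where `a` is distributed
according to `μ`. -/
noncomputable def bindUniform (μ : PMF Ω) (E : Ω → Finset Ω')
    (hE : ∀ a ∈ μ.support, (E a).Nonempty) : PMF Ω' :=
  μ.bindOnSupport fun a ha ↦ PMF.uniformOfFinset (E a) (hE a ha)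

variable {μ : PMF Ω} {E : Ω → Finset Ω'} {hE : ∀ a ∈ μ.support, (E a).Nonempty}

theorem mem_support_bindUniform {b : Ω'} :
    b ∈ (bindUniform μ E hE).support ↔ ∃ a ∈ μ.support, b ∈ E a := by
  simp [bindUniform]

theorem mul_toOuterMeasure_le_bindUniform {A : Set Ω'} {B : Set Ω} {r : ℝ≥0∞}
    (hr : ∀ a ∈ μ.support, r ≤ (#(E a) : ℝ≥0∞)⁻¹)
    (h : ∀ a ∈ μ.support, a ∈ B → ∃ b ∈ E a, b ∈ A) :
    μ.toOuterMeasure B * r ≤ (bindUniform μ E hE).toOuterMeasure A := by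
  refine mul_toOuterMeasure_le_bindOnSupport μ _ fun a ha haB ↦ ?_
  obtain ⟨b, hbE, hbA⟩ := h a ha haB
  exact (hr a ha).trans (inv_card_le_toOuterMeasure_uniformOfFinset _ hbE hbA)

theorem toOuterMeasure_le_bindUniform {A : Set Ω'} {B : Set Ω}
    (h : ∀ a ∈ μ.support, a ∈ B → ∀ b ∈ E a, b ∈ A) :
    μ.toOuterMeasure B ≤ (bindUniform μ E hE).toOuterMeasure A := by
  rw [← mul_one (μ.toOuterMeasure B)]
  refine mul_toOuterMeasure_le_bindOnSupport μ _ fun a ha haB ↦ ge_of_eq ?_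
  rw [PMF.toOuterMeasure_apply_eq_one_iff, PMF.support_uniformOfFinset]
  exact h a ha haB

theorem exists_indexed_of_finite_support (μ : PMF Ω) (hμ : μ.support.Finite) :
    ∃ (s : Finset ℕ) (p : ℕ → ℝ) (f : ℕ → Ω),
      (∀ i ∈ s, 0 ≤ p i) ∧ ∑ i ∈ s, p i = 1 ∧ (∀ i ∈ s, f i ∈ μ.support) ∧
      ∀ (A : Ω → Prop) [DecidablePred A],
        ∑ i ∈ s with A (f i), p i = (μ.toOuterMeasure {a | A a}).toReal := by
  classical
  have : Nonempty Ω := μ.support_nonempty.to_subtype.map Subtype.val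
  obtain ⟨g, hg⟩ := Set.countable_iff_exists_injOn.mp hμ.countable
  set f := invFunOn g μ.support
  have hfg : ∀ a ∈ μ.support, f (g a) = a := hg.leftInvOn_invFunOn
  have hsum (A : Ω → Prop) [DecidablePred A] :
      ∑ i ∈ hμ.toFinset.image g with A (f i), (μ (f i)).toReal =
        (μ.toOuterMeasure {a | A a}).toReal := by
    have hA : {a | A a} ∩ μ.support = ({a ∈ hμ.toFinset | A a} : Finset Ω) := by
      ext a
      simp [and_comm]
    rw [← PMF.toOuterMeasure_apply_inter_support, hA, PMF.toOuterMeasure_apply_finset,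
      ENNReal.toReal_sum fun a _ ↦ μ.apply_ne_top a, sum_filter, sum_filter,
      sum_image (by simpa using hg)]
    refine sum_congr rfl fun a ha ↦ ?_
    rw [hfg a (hμ.mem_toFinset.mp ha)]
  refine ⟨hμ.toFinset.image g, fun i ↦ (μ (f i)).toReal, f, fun _ _ ↦ ENNReal.toReal_nonneg,
    ?_, ?_, fun A _ ↦ hsum A⟩
  · simpa [toOuterMeasure_univ] using hsum fun _ ↦ True
  · simp only [mem_image, Set.Finite.mem_toFinset, forall_exists_index, and_imp]
    rintro _ a ha rfl
    rwa [hfg a ha]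

end PMF

section DegreeIn

variable {V : Type*} {G : SimpleGraph V} {W W' : Finset V} {v w : V}

open Classical in
/-- The number of neighbours of `v` in the finite set `W`; the vertex `v` need not lie in `W`. -/
noncomputable def degreeIn (G : SimpleGraph V) (W : Finset V) (v : V) : ℕ :=
  #{w ∈ W | G.Adj v w}

theorem degreeIn_mono (h : W ⊆ W') : degreeIn G W v ≤ degreeIn G W' v := by
  classical
  exact card_le_card (filter_subset_filter _ h)

theorem degreeIn_lt_degreeIn (h : W ⊆ W') (hw' : w ∈ W') (hw : w ∉ W) (hvw : G.Adj v w) :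
    degreeIn G W v < degreeIn G W' v := by
  classical
  refine card_lt_card ⟨filter_subset_filter _ h, fun hsub ↦ hw ?_⟩
  exact mem_of_mem_filter w (hsub (mem_filter.mpr ⟨hw', hvw⟩))

theorem ncard_neighborSet_induce_top (hv : v ∈ W) :
    (((⊤ : G.Subgraph).induce (W : Set V)).neighborSet v).ncard = degreeIn G W v := by
  classical
  rw [degreeIn, ← Set.ncard_coe_finset]
  congr 1
  ext w
  simp [SimpleGraph.Subgraph.mem_neighborSet, hv]

end DegreeIn

theorem exists_adj_mem_notMem_of_preconnected {V : Type*} {G : SimpleGraph V} (hG : G.Preconnected)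
    {s : Set V} {a b : V} (ha : a ∈ s) (hb : b ∉ s) : ∃ v ∈ s, ∃ w ∉ s, G.Adj v w := by
  obtain ⟨p⟩ := hG a b
  obtain ⟨e, -, he, he'⟩ := p.exists_boundary_dart s ha hb
  exact ⟨_, he, _, he', e.adj⟩

section Removable

variable {V : Type*} [DecidableEq V] {G : SimpleGraph V} {d : ℕ} {W P : Finset V} {v : V}

/-- `P` is a set of vertices that can be split off from `G[W]` in an inductive construction of
colourings from lists of size `d + 2`: both kinds of sets in the definition of weak
`d`-degeneracy have this property. -/
structure IsRemovable (G : SimpleGraph V) (d : ℕ) (W P : Finset V) : Prop where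
  subset : P ⊆ W
  nonempty : P.Nonempty
  card_le : #P ≤ d + 1
  degreeIn_le : ∀ v ∈ P, degreeIn G W v ≤ d + 1
  exists_degreeIn_le : ∀ Q ⊆ P, Q.Nonempty → #Q ≤ d → ∃ v ∈ Q, degreeIn G (W \ P ∪ Q) v ≤ d

theorem isRemovable_singleton (hv : v ∈ W) (hdeg : degreeIn G W v ≤ d) : IsRemovable G d W {v} where
  subset := singleton_subset_iff.mpr hv
  nonempty := singleton_nonempty v
  card_le := by simp
  degreeIn_le := by simpa using hdeg.trans d.le_succ
  exists_degreeIn_le := by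
    rintro Q hQ ⟨w, hw⟩ -
    obtain rfl : w = v := mem_singleton.mp (hQ hw)
    have hsub : W \ {w} ∪ Q ⊆ W :=
      union_subset sdiff_subset (hQ.trans (singleton_subset_iff.mpr hv))
    exact ⟨w, hw, (degreeIn_mono hsub).trans hdeg⟩

theorem isRemovable_of_connected (hPW : P ⊆ W) (hcard : #P = d + 1)
    (hdeg : ∀ v ∈ P, degreeIn G W v = d + 1) (hconn : (G.induce (P : Set V)).Connected) :
    IsRemovable G d W P where
  subset := hPW
  nonempty := card_pos.mp (by omega)
  card_le := hcard.le
  degreeIn_le v hv := (hdeg v hv).le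
  exists_degreeIn_le := by
    rintro Q hQ ⟨a, ha⟩ hQd
    obtain ⟨b, hb, hbQ⟩ := exists_mem_notMem_of_card_lt_card (s := Q) (t := P) (by omega)
    obtain ⟨⟨v, hvP⟩, hv, ⟨w, hwP⟩, hw, hvw⟩ := exists_adj_mem_notMem_of_preconnected
      hconn.preconnected (s := {x | x.1 ∈ Q}) (a := ⟨a, hQ ha⟩) (b := ⟨b, hb⟩) ha hbQ
    have hlt : degreeIn G (W \ P ∪ Q) v < degreeIn G W v :=
      degreeIn_lt_degreeIn (union_subset sdiff_subset (hQ.trans hPW)) (hPW hwP)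
        (by simp [mem_coe.mp hwP, show w ∉ Q from hw]) hvw
    rw [hdeg v hvP] at hlt
    exact ⟨v, hv, Nat.lt_succ_iff.mp hlt⟩

theorem WeaklyDegenerate.exists_isRemovable (hG : WeaklyDegenerate G d) (hW : W.Nonempty) :
    ∃ P, IsRemovable G d W P := by
  rcases hG ((⊤ : G.Subgraph).induce (W : Set V)) (by simpa using hW) with
    ⟨v, hv, hdeg⟩ | ⟨P, hPW, hcard, hdeg, hconn⟩
  · have hvW : v ∈ W := by simpa using hv
    rw [ncard_neighborSet_induce_top hvW] at hdeg
    exact ⟨{v}, isRemovable_singleton hvW hdeg⟩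
  · have hPW' : P ⊆ W := by simpa using hPW
    refine ⟨P, isRemovable_of_connected hPW' hcard (fun v hv ↦ ?_) ?_⟩
    · rw [← ncard_neighborSet_induce_top (hPW' hv), hdeg v hv]
    · rw [SimpleGraph.connected_induce_iff]
      refine hconn.mono ?_ ?_
      · exact SimpleGraph.Subgraph.induce_mono_left le_top
      · rfl

end Removable

section ListColoring

variable {V α : Type*} {G : SimpleGraph V} {L : V → Finset α} {φ : V → α}

/-- `φ` chooses a colour from the list of every vertex and is a proper colouring of `G[W]`. Colours
outside `W` are chosen too, so that all partial colourings have the same type. -/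
structure IsListColoringOn (G : SimpleGraph V) (L : V → Finset α) (W : Finset V) (φ : V → α) :
    Prop where
  mem : ∀ v, φ v ∈ L v
  ne : ∀ u ∈ W, ∀ w ∈ W, G.Adj u w → φ u ≠ φ w

theorem isListColoringOn_empty (hφ : ∀ v, φ v ∈ L v) : IsListColoringOn G L ∅ φ :=
  ⟨hφ, by simp⟩

variable [DecidableEq V] {W P A : Finset V} {v : V} {c : α}

theorem IsListColoringOn.insert_update (hφ : IsListColoringOn G L A φ) (hc : c ∈ L v)
    (hne : ∀ w ∈ A, G.Adj v w → φ w ≠ c) :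
    IsListColoringOn G L (insert v A) (update φ v c) where
  mem w := by
    rcases eq_or_ne w v with rfl | hw
    · simpa using hc
    · simpa [hw] using hφ.mem w
  ne a ha b hb hab := by
    rcases eq_or_ne a v with rfl | hav
    · rw [update_self, update_of_ne hab.ne']
      exact (hne b (mem_of_mem_insert_of_ne hb hab.ne') hab).symm
    have haA := mem_of_mem_insert_of_ne ha hav
    rcases eq_or_ne b v with rfl | hbv
    · rw [update_self, update_of_ne hav]
      exact hne a haA hab.symm
    · rw [update_of_ne hav, update_of_ne hbv]
      exact hφ.ne a haA b (mem_of_mem_insert_of_ne hb hbv) hab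

theorem IsListColoringOn.exists_extend {L' : V → Finset α}
    (hφ : IsListColoringOn G L A φ) (hL' : ∀ v ∈ P, L' v ⊆ L v)
    (hP : ∀ Q ⊆ P, Q.Nonempty → ∃ v ∈ Q, degreeIn G (A ∪ Q) v < #(L' v)) :
    ∃ ψ, IsListColoringOn G L (A ∪ P) ψ ∧ (∀ v ∉ P, ψ v = φ v) ∧ ∀ v ∈ P, ψ v ∈ L' v := by
  classical
  induction P using Finset.strongInduction with
  | H P ih =>
  rcases P.eq_empty_or_nonempty with rfl | hne
  · exact ⟨φ, by simpa using hφ, by simp, by simp⟩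
  obtain ⟨v, hv, hlt⟩ := hP P subset_rfl hne
  obtain ⟨ψ, hψ, hψφ, hψL'⟩ := ih (P.erase v) (erase_ssubset hv)
    (fun w hw ↦ hL' w (mem_of_mem_erase hw)) (fun Q hQ ↦ hP Q (hQ.trans (erase_subset v P)))
  obtain ⟨c, hc, hcψ⟩ : ∃ c ∈ L' v, c ∉ image ψ {w ∈ A ∪ P | G.Adj v w} :=
    exists_mem_notMem_of_card_lt_card (card_image_le.trans_lt hlt)
  have hfree : ∀ w ∈ A ∪ P.erase v, G.Adj v w → ψ w ≠ c := by
    rintro w hw hvw rfl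
    have hwP : w ∈ A ∪ P := union_subset_union_right (erase_subset v P) hw
    exact hcψ (mem_image_of_mem ψ (mem_filter.mpr ⟨hwP, hvw⟩))
  refine ⟨update ψ v c, ?_, fun w hw ↦ ?_, fun w hw ↦ ?_⟩
  · simpa only [← union_insert, insert_erase hv] using hψ.insert_update (hL' v hv hc) hfree
  · rw [update_of_ne (ne_of_mem_of_not_mem hv hw).symm, hψφ w (hw ∘ mem_of_mem_erase)]
  · rcases eq_or_ne w v with rfl | hwv
    · rwa [update_self]
    · rw [update_of_ne hwv]
      exact hψL' w (mem_erase.mpr ⟨hwv, hw⟩)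

open Classical in
/-- The list colourings on `W` that agree with `φ` outside `P`. -/
noncomputable def listExtensions [Fintype V] (G : SimpleGraph V) (L : V → Finset α)
    (W P : Finset V) (φ : V → α) : Finset (V → α) :=
  {ψ ∈ Fintype.piFinset (P.piecewise L fun v ↦ {φ v}) | IsListColoringOn G L W ψ}

theorem mem_listExtensions [Fintype V] {ψ : V → α} :
    ψ ∈ listExtensions G L W P φ ↔ IsListColoringOn G L W ψ ∧ ∀ v ∉ P, ψ v = φ v := by
  classical
  rw [listExtensions, mem_filter, Fintype.mem_piFinset, and_comm, and_congr_right_iff]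
  refine fun hψ ↦ forall_congr' fun v ↦ ?_
  by_cases hv : v ∈ P <;> simp [hv, hψ.mem v]

theorem card_listExtensions_le [Fintype V] :
    #(listExtensions G L W P φ) ≤ ∏ v ∈ P, #(L v) := by
  classical
  refine (card_filter_le _ _).trans_eq ?_
  simp [Fintype.card_piFinset, piecewise, apply_ite]

namespace IsRemovable

variable [Fintype V] {d : ℕ}

theorem exists_listExtension_ne (hP : IsRemovable G d W P) (hL : ∀ v ∈ P, d + 2 ≤ #(L v))
    (hφ : IsListColoringOn G L (W \ P) φ) {S : Finset V} (hS : #S ≤ d) (c : α) :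
    ∃ ψ ∈ listExtensions G L W P φ, ∀ v ∈ S, v ∈ P → ψ v ≠ c := by
  classical
  have hcolor : ∀ Q ⊆ P, Q.Nonempty →
      ∃ v ∈ Q, degreeIn G (W \ P ∪ Q) v < #(if v ∈ S then (L v).erase c else L v) := by
    intro Q hQ hQne
    by_cases hQS : Q ⊆ S
    · obtain ⟨v, hv, hdeg⟩ := hP.exists_degreeIn_le Q hQ hQne ((card_le_card hQS).trans hS)
      have herase : #(L v) - 1 ≤ #((L v).erase c) := pred_card_le_card_erase
      have hLv := hL v (hQ hv)
      refine ⟨v, hv, ?_⟩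
      rw [if_pos (hQS hv)]
      omega
    · obtain ⟨v, hv, hvS⟩ := not_subset.mp hQS
      have hdeg : degreeIn G (W \ P ∪ Q) v ≤ degreeIn G W v :=
        degreeIn_mono (union_subset sdiff_subset (hQ.trans hP.subset))
      refine ⟨v, hv, ?_⟩
      rw [if_neg hvS]
      linarith [hP.degreeIn_le v (hQ hv), hL v (hQ hv)]
  obtain ⟨ψ, hψ, hψφ, hψL⟩ := hφ.exists_extend
    (fun v _ ↦ by split_ifs; exacts [erase_subset c _, subset_rfl]) hcolor
  rw [sdiff_union_of_subset hP.subset] at hψ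
  refine ⟨ψ, mem_listExtensions.mpr ⟨hψ, hψφ⟩, fun v hvS hvP ↦ ?_⟩
  have hmem := hψL v hvP
  rw [if_pos hvS] at hmem
  exact ne_of_mem_erase hmem

theorem exists_listExtension_eq (hP : IsRemovable G d W P) (hL : ∀ v ∈ P, d + 2 ≤ #(L v))
    (hφ : IsListColoringOn G L (W \ P) φ) (hv : v ∈ P) (hc : c ∈ L v)
    (hne : ∀ w ∈ W \ P, G.Adj v w → φ w ≠ c) :
    ∃ ψ ∈ listExtensions G L W P φ, ψ v = c := by
  have hW : insert v (W \ P) ∪ P.erase v = W := by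
    rw [insert_union, ← union_insert, insert_erase hv, sdiff_union_of_subset hP.subset]
  obtain ⟨ψ, hψ, hψφ, -⟩ := (hφ.insert_update hc hne).exists_extend (P := P.erase v)
    (fun _ _ ↦ subset_rfl) (by
      rintro Q hQ ⟨w, hw⟩
      have hdeg : degreeIn G (insert v (W \ P) ∪ Q) w ≤ degreeIn G W w :=
        degreeIn_mono ((union_subset_union_right hQ).trans hW.subset)
      have hwP := mem_of_mem_erase (hQ hw)
      exact ⟨w, hw, by linarith [hP.degreeIn_le w hwP, hL w hwP]⟩)
  rw [hW] at hψ
  refine ⟨ψ, mem_listExtensions.mpr ⟨hψ, fun w hw ↦ ?_⟩, ?_⟩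
  · rw [hψφ w (hw ∘ mem_of_mem_erase), update_of_ne (ne_of_mem_of_not_mem hv hw).symm]
  · rw [hψφ v (notMem_erase v P), update_self]

end IsRemovable

end ListColoring

section Flexible

variable {V α : Type*} {G : SimpleGraph V} {L : V → Finset α} {d : ℕ} {W P : Finset V}

/-- `μ` is a distribution on list colourings of `G[W]` that takes each colour available at a vertex
with probability at least `ε`, and avoids any given colour on any given set `S ⊆ W` of at most `d`
vertices with probability at least `δ ^ #S`. -/
structure IsFlexibleOn (G : SimpleGraph V) (L : V → Finset α) (d : ℕ) (ε δ : ℝ≥0∞) (W : Finset V)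
    (μ : PMF (V → α)) : Prop where
  isListColoringOn : ∀ φ ∈ μ.support, IsListColoringOn G L W φ
  le_eq : ∀ v ∈ W, ∀ c ∈ L v, ε ≤ μ.toOuterMeasure {φ | φ v = c}
  pow_le_ne : ∀ S ⊆ W, #S ≤ d → ∀ c, δ ^ #S ≤ μ.toOuterMeasure {φ | ∀ v ∈ S, φ v ≠ c}

theorem IsFlexibleOn.finite_support [Finite V] {ε δ : ℝ≥0∞} {μ : PMF (V → α)}
    (hμ : IsFlexibleOn G L d ε δ W μ) : μ.support.Finite :=
  (Set.Finite.pi' fun v ↦ (L v).finite_toSet).subset fun φ hφ ↦ (hμ.isListColoringOn φ hφ).mem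

theorem isFlexibleOn_empty_pure {φ : V → α} (hφ : ∀ v, φ v ∈ L v) (ε δ : ℝ≥0∞) :
    IsFlexibleOn G L d ε δ ∅ (PMF.pure φ) where
  isListColoringOn ψ hψ := by
    obtain rfl := (PMF.mem_support_pure_iff φ ψ).mp hψ
    exact isListColoringOn_empty hφ
  le_eq := by simp
  pow_le_ne S hS _ c := by
    obtain rfl := subset_empty.mp hS
    simp [toOuterMeasure_univ]

section Extend

variable [Fintype V] [DecidableEq V] {μ : PMF (V → α)} {ε δ : ℝ≥0∞}
  {hE : ∀ φ ∈ μ.support, (listExtensions G L W P φ).Nonempty}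

theorem IsFlexibleOn.le_bindUniform_eq (hμ : IsFlexibleOn G L d ε δ (W \ P) μ)
    (hP : IsRemovable G d W P) (hL : ∀ v ∈ P, d + 2 ≤ #(L v)) (hd : 1 ≤ d)
    (hε : ε ≤ δ ^ (d + 1)) (hδ : δ ≤ ((∏ v ∈ P, #(L v) : ℕ) : ℝ≥0∞)⁻¹) (hδ1 : δ ≤ 1)
    {v : V} (hv : v ∈ W) {c : α} (hc : c ∈ L v) :
    ε ≤ (bindUniform μ (listExtensions G L W P) hE).toOuterMeasure {φ | φ v = c} := by
  classical
  by_cases hvP : v ∈ P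
  · set N : Finset V := {w ∈ W \ P | G.Adj v w}
    have hN : #N ≤ d := by
      obtain ⟨w, hw, hdeg⟩ := hP.exists_degreeIn_le {v} (by simpa using hvP) (by simp) (by simpa)
      obtain rfl := mem_singleton.mp hw
      exact (degreeIn_mono subset_union_left).trans hdeg
    calc
      ε ≤ δ ^ d * δ := hε.trans_eq (pow_succ δ d)
      _ ≤ δ ^ #N * δ := by gcongr ?_ * δ; exact pow_le_pow_right_of_le_one' hδ1 hN
      _ ≤ μ.toOuterMeasure {φ | ∀ w ∈ N, φ w ≠ c} * δ := by
        gcongr; exact hμ.pow_le_ne N (filter_subset _ _) hN c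
      _ ≤ _ := mul_toOuterMeasure_le_bindUniform
        (fun φ _ ↦ hδ.trans (by gcongr; exact card_listExtensions_le)) fun φ hφ hφN ↦
          hP.exists_listExtension_eq hL (hμ.isListColoringOn φ hφ) hvP hc fun w hw hvw ↦
            hφN w (mem_filter.mpr ⟨hw, hvw⟩)
  · refine (hμ.le_eq v (mem_sdiff.mpr ⟨hv, hvP⟩) c hc).trans
      (toOuterMeasure_le_bindUniform fun φ _ hφ ψ hψ ↦ ?_)
    exact ((mem_listExtensions.mp hψ).2 v hvP).trans hφ

theorem IsFlexibleOn.pow_le_bindUniform_ne (hμ : IsFlexibleOn G L d ε δ (W \ P) μ)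
    (hP : IsRemovable G d W P) (hL : ∀ v ∈ P, d + 2 ≤ #(L v))
    (hδ : δ ≤ ((∏ v ∈ P, #(L v) : ℕ) : ℝ≥0∞)⁻¹) (hδ1 : δ ≤ 1)
    {S : Finset V} (hSW : S ⊆ W) (hS : #S ≤ d) (c : α) :
    δ ^ #S ≤
      (bindUniform μ (listExtensions G L W P) hE).toOuterMeasure {φ | ∀ v ∈ S, φ v ≠ c} := by
  by_cases hSP : Disjoint S P
  · refine (hμ.pow_le_ne S (subset_sdiff.mpr ⟨hSW, hSP⟩) hS c).trans
      (toOuterMeasure_le_bindUniform fun φ _ hφ ψ hψ v hv ↦ ?_)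
    rw [(mem_listExtensions.mp hψ).2 v (disjoint_left.mp hSP hv)]
    exact hφ v hv
  · have hcard : #(S \ P) < #S :=
      card_lt_card (sdiff_subset.ssubset_of_ne (mt Finset.sdiff_eq_self_iff_disjoint.mp hSP))
    calc
      δ ^ #S ≤ δ ^ (#(S \ P) + 1) := pow_le_pow_right_of_le_one' hδ1 hcard
      _ = δ ^ #(S \ P) * δ := pow_succ _ _
      _ ≤ μ.toOuterMeasure {φ | ∀ v ∈ S \ P, φ v ≠ c} * δ := by
        gcongr
        exact hμ.pow_le_ne _ (sdiff_subset_sdiff hSW subset_rfl) (hcard.le.trans hS) c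
      _ ≤ _ := mul_toOuterMeasure_le_bindUniform
        (fun φ _ ↦ hδ.trans (by gcongr; exact card_listExtensions_le)) fun φ hφ hφS ↦ ?_
    obtain ⟨ψ, hψ, hψS⟩ := hP.exists_listExtension_ne hL (hμ.isListColoringOn φ hφ) hS c
    refine ⟨ψ, hψ, fun v hv ↦ ?_⟩
    by_cases hvP : v ∈ P
    · exact hψS v hv hvP
    · rw [(mem_listExtensions.mp hψ).2 v hvP]
      exact hφS v (mem_sdiff.mpr ⟨hv, hvP⟩)

end Extend

theorem IsFlexibleOn.exists_extend [Finite V] [DecidableEq V] {μ : PMF (V → α)} {ε δ : ℝ≥0∞}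
    (hμ : IsFlexibleOn G L d ε δ (W \ P) μ) (hP : IsRemovable G d W P)
    (hL : ∀ v ∈ P, d + 2 ≤ #(L v)) (hd : 1 ≤ d) (hε : ε ≤ δ ^ (d + 1))
    (hδ : δ ≤ ((∏ v ∈ P, #(L v) : ℕ) : ℝ≥0∞)⁻¹) :
    ∃ μ', IsFlexibleOn G L d ε δ W μ' := by
  cases nonempty_fintype V
  have hδ1 : δ ≤ 1 := by
    have hprod : 0 < ∏ v ∈ P, #(L v) := prod_pos fun v hv ↦ by linarith [hL v hv]
    refine hδ.trans (ENNReal.inv_le_one.mpr ?_)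
    exact_mod_cast hprod
  have hE : ∀ φ ∈ μ.support, (listExtensions G L W P φ).Nonempty := fun φ hφ ↦ by
    obtain ⟨v, -⟩ := hP.nonempty
    obtain ⟨ψ, hψ, -⟩ := hP.exists_listExtension_ne hL (hμ.isListColoringOn φ hφ)
      (S := ∅) (by simp) (φ v)
    exact ⟨ψ, hψ⟩
  refine ⟨bindUniform μ (listExtensions G L W P) hE, fun ψ hψ ↦ ?_,
    fun v hv c hc ↦ hμ.le_bindUniform_eq hP hL hd hε hδ hδ1 hv hc,
    fun S hSW hS c ↦ hμ.pow_le_bindUniform_ne hP hL hδ hδ1 hSW hS c⟩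
  obtain ⟨φ, -, hφψ⟩ := mem_support_bindUniform.mp hψ
  exact (mem_listExtensions.mp hφψ).1

theorem WeaklyDegenerate.exists_isFlexibleOn [Finite V] (hG : WeaklyDegenerate G d)
    (hL : ∀ v, #(L v) = d + 2) (hd : 1 ≤ d) {ε δ : ℝ≥0∞} (hε : ε ≤ δ ^ (d + 1))
    (hδ : δ ≤ (((d + 2) ^ (d + 1) : ℕ) : ℝ≥0∞)⁻¹) (W : Finset V) :
    ∃ μ, IsFlexibleOn G L d ε δ W μ := by
  classical
  induction W using Finset.strongInduction with
  | H W ih =>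
  rcases W.eq_empty_or_nonempty with rfl | hW
  · have hne (v : V) : (L v).Nonempty := card_pos.mp (by simp [hL v])
    choose φ hφ using hne
    exact ⟨PMF.pure φ, isFlexibleOn_empty_pure hφ ε δ⟩
  · obtain ⟨P, hP⟩ := hG.exists_isRemovable hW
    obtain ⟨μ, hμ⟩ := ih (W \ P) (sdiff_ssubset hP.subset hP.nonempty)
    have hprod : ∏ v ∈ P, #(L v) ≤ (d + 2) ^ (d + 1) := by
      simpa [hL] using Nat.pow_le_pow_right (by omega) hP.card_le
    exact hμ.exists_extend hP (fun v _ ↦ (hL v).ge) hd hε (hδ.trans (by gcongr))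

end Flexible

section DegreeZero

variable {V α : Type*} {G : SimpleGraph V} {L : V → Finset α}

theorem exists_pair_eq_pair_ne [DecidableEq α] {a a' b b' : α} (ha : a ≠ a') (hb : b ≠ b') :
    ∃ x y, ({a, a'} : Finset α) = {x, y} ∧ x ≠ b ∧ y ≠ b' := by
  by_cases h : a ≠ b ∧ a' ≠ b'
  · exact ⟨a, a', rfl, h⟩
  · exact ⟨a', a, pair_comm a a', by grind⟩

theorem exists_forall_adj_eq_of_degreeIn_le_one {W : Finset V} {v : V}
    (hv : degreeIn G W v ≤ 1) : ∃ u, ∀ w ∈ W, G.Adj v w → w = u := by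
  classical
  have : Nonempty V := ⟨v⟩
  obtain ⟨u, hu⟩ := card_le_one_iff_subset_singleton.mp hv
  exact ⟨u, fun w hw hvw ↦ mem_singleton.mp (hu (mem_filter.mpr ⟨hw, hvw⟩))⟩

theorem WeaklyDegenerate.exists_isListColoringOn_pair [DecidableEq α]
    (hG : WeaklyDegenerate G 0) (hL : ∀ v, #(L v) = 2) (W : Finset V) :
    ∃ φ φ', IsListColoringOn G L W φ ∧ IsListColoringOn G L W φ' ∧ ∀ v, L v = {φ v, φ' v} := by
  classical
  induction W using Finset.strongInduction with
  | H W ih =>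
  rcases W.eq_empty_or_nonempty with rfl | hW
  · choose φ φ' _ hφ using fun v ↦ card_eq_two.mp (hL v)
    exact ⟨φ, φ', isListColoringOn_empty (by simp [hφ]), isListColoringOn_empty (by simp [hφ]), hφ⟩
  obtain ⟨P, hP⟩ := hG.exists_isRemovable hW
  obtain ⟨v, hv⟩ := hP.nonempty
  have hvW := hP.subset hv
  obtain ⟨φ, φ', hφ, hφ', hpair⟩ := ih (W.erase v) (erase_ssubset hvW)
  have hne (w : V) : φ w ≠ φ' w := fun h ↦ by simpa [hpair w, h] using hL w
  obtain ⟨u, hu⟩ := exists_forall_adj_eq_of_degreeIn_le_one (hP.degreeIn_le v hv)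
  obtain ⟨x, y, hxy, hx, hy⟩ := exists_pair_eq_pair_ne (hne v) (hne u)
  rw [← hpair v] at hxy
  have extend {χ : V → α} {z : α} (hχ : IsListColoringOn G L (W.erase v) χ) (hz : z ∈ L v)
      (hzu : z ≠ χ u) : IsListColoringOn G L W (update χ v z) := by
    rw [← insert_erase hvW]
    refine hχ.insert_update hz fun w hw hvw ↦ ?_
    rw [hu w (mem_of_mem_erase hw) hvw]
    exact hzu.symm
  refine ⟨update φ v x, update φ' v y, extend hφ (by simp [hxy]) hx, extend hφ' (by simp [hxy]) hy,
    fun w ↦ ?_⟩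
  rcases eq_or_ne w v with rfl | hw
  · simpa using hxy
  · simpa [hw] using hpair w

theorem WeaklyDegenerate.exists_isFlexibleOn_zero (hG : WeaklyDegenerate G 0)
    (hL : ∀ v, #(L v) = 2) (W : Finset V) : ∃ μ, IsFlexibleOn G L 0 2⁻¹ 1 W μ := by
  classical
  obtain ⟨φ, φ', hφ, hφ', hpair⟩ := hG.exists_isListColoringOn_pair hL W
  refine ⟨PMF.uniformOfFinset {φ, φ'} (insert_nonempty _ _), ?_, fun v _ c hc ↦ ?_,
    fun S _ _ c ↦ ?_⟩
  · simp [hφ, hφ']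
  · obtain ⟨ψ, hψ, hψc⟩ : ∃ ψ ∈ ({φ, φ'} : Finset (V → α)), ψ v = c := by
      simpa [hpair v, eq_comm] using hc
    refine le_trans ?_ (inv_card_le_toOuterMeasure_uniformOfFinset _ hψ hψc)
    gcongr
    exact_mod_cast card_le_two
  · obtain rfl : S = ∅ := by simp_all
    simp [toOuterMeasure_univ]

end DegreeZero

theorem exists_forall_isFlexibleOn_univ (d : ℕ) :
    ∃ ε : ℝ≥0, 0 < ε ∧ ∃ δ : ℝ≥0, 0 < δ ∧
      ∀ (V : Type u) [Fintype V] (α : Type v) (G : SimpleGraph V) (L : V → Finset α),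
        (∀ v, #(L v) = d + 2) → WeaklyDegenerate G d →
          ∃ μ, IsFlexibleOn G L d ε δ univ μ := by
  rcases d.eq_zero_or_pos with rfl | hd
  · refine ⟨2⁻¹, by positivity, 1, one_pos, fun V _ α G L hL hG ↦ ?_⟩
    simpa using hG.exists_isFlexibleOn_zero hL univ
  · set δ : ℝ≥0 := (((d + 2) ^ (d + 1) : ℕ) : ℝ≥0)⁻¹
    refine ⟨δ ^ (d + 1), by positivity, δ, by positivity, fun V _ α G L hL hG ↦ ?_⟩
    exact hG.exists_isFlexibleOn hL hd (by simp) (by simp [δ]) univ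

theorem stmt11_general (d : ℕ) :
    ∃ ε : ℝ, 0 < ε ∧ ∃ δ : ℝ, 0 < δ ∧
      ∀ (V : Type u) [Finite V] (α : Type v) [DecidableEq α] (G : SimpleGraph V)
        (L : V → Finset α), (∀ v, #(L v) = d + 2) → WeaklyDegenerate G d →
        ∃ (s : Finset ℕ) (p : ℕ → ℝ) (f : ℕ → V → α),
          (∀ i ∈ s, 0 ≤ p i) ∧ ∑ i ∈ s, p i = 1 ∧
          (∀ i ∈ s, (∀ v, f i v ∈ L v) ∧ ∀ ⦃u w : V⦄, G.Adj u w → f i u ≠ f i w) ∧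
          (∀ v : V, ∀ c ∈ L v, ε ≤ ∑ i ∈ s with f i v = c, p i) ∧
          (∀ S : Finset V, #S ≤ d → ∀ c : α,
            δ ^ #S ≤ ∑ i ∈ s with ∀ v ∈ S, f i v ≠ c, p i) := by
  obtain ⟨ε, hε, δ, hδ, hflex⟩ := exists_forall_isFlexibleOn_univ.{u, v} d
  refine ⟨ε, hε, δ, hδ, fun V _ α _ G L hL hG ↦ ?_⟩
  cases nonempty_fintype V
  obtain ⟨μ, hμ⟩ := hflex V α G L hL hG
  obtain ⟨s, p, f, hp, hsum, hf, hprob⟩ := exists_indexed_of_finite_support μ hμ.finite_support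
  have hreal {A : (V → α) → Prop} [DecidablePred A] {r : ℝ≥0}
      (h : r ≤ μ.toOuterMeasure {φ | A φ}) : (r : ℝ) ≤ ∑ i ∈ s with A (f i), p i := by
    have hle : μ.toOuterMeasure {φ | A φ} ≤ 1 :=
      (MeasureTheory.measure_mono (Set.subset_univ _)).trans_eq (toOuterMeasure_univ μ)
    rw [hprob]
    exact ENNReal.toReal_mono (ne_top_of_le_ne_top ENNReal.one_ne_top hle) h
  refine ⟨s, p, f, hp, hsum, fun i hi ↦ ?_, fun v c hc ↦ hreal (hμ.le_eq v (mem_univ v) c hc),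
    fun S hS c ↦ ?_⟩
  · have hφ := hμ.isListColoringOn (f i) (hf i hi)
    exact ⟨hφ.mem, fun u w ↦ hφ.ne u (mem_univ u) w (mem_univ w)⟩
  · exact_mod_cast hreal (r := δ ^ #S) (mod_cast hμ.pow_le_ne S (subset_univ S) hS c)

theorem stmt11 (d : ℕ) :
    ∃ ε : ℝ, 0 < ε ∧ ∃ δ : ℝ, 0 < δ ∧
      ∀ (V : Type) [Fintype V] (G : SimpleGraph V) (L : V → Finset ℕ),
        (∀ v, (L v).card = d + 2) → WeaklyDegenerate G d →
        ∃ (s : Finset ℕ) (p : ℕ → ℝ) (f : ℕ → V → ℕ),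
          (∀ i ∈ s, 0 ≤ p i) ∧ ∑ i ∈ s, p i = 1 ∧
          (∀ i ∈ s, IsLColoring G L (f i)) ∧
          (∀ v : V, ∀ c ∈ L v, ε ≤ ∑ i ∈ s.filter fun i => f i v = c, p i) ∧
          (∀ S : Finset V, S.card ≤ d → ∀ c : ℕ,
            δ ^ S.card ≤ ∑ i ∈ s.filter fun i => ∀ v ∈ S, f i v ≠ c, p i) :=
  let ⟨ε, hε, δ, hδ, h⟩ := stmt11_general d
  ⟨ε, hε, δ, hδ, fun V _ G L ↦ h V ℕ G L⟩
end

section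
/- Let d ≥ 0 be an integer. If a finite non-null graph G has average degree less than d + 1 + 2/(d+4), then either G contains a vertex of degree at most d, or G contains a vertex of degree d+1 with at most one neighbor of degree greater than d+1. -/
/-!
Suppose that every degree is at least `k` and that every vertex of degree `k` has at least `t`
neighbours of larger degree. Let `s` vertices have degree `k`, let `l` have larger degree, and let
`D` be the sum of the degrees of the latter. Counting the edges between the two kinds of vertices
gives `s * t ≤ D`, while trivially `l * (k + 1) ≤ D`. The degree sum is `s * k + D`, and averaging
the two bounds on `D` with weights `1` and `k + t` makes the coefficients of `s` and `l` equal: the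
average degree is at least `k + t / (k + t + 1)`.
-/

section DegreeCounting

open Finset

variable {V : Type*} (G : SimpleGraph V)

theorem card_mul_le_sum_degree_of_le_card_inter [G.LocallyFinite] [DecidableEq V]
    {S T : Finset V} {t : ℕ} (hST : ∀ v ∈ S, t ≤ #(G.neighborFinset v ∩ T)) :
    #S * t ≤ ∑ u ∈ T, G.degree u := by
  classical
  calc #S * t
      ≤ ∑ v ∈ S, #(G.neighborFinset v ∩ T) := card_nsmul_le_sum S _ t hST
    _ = ∑ v ∈ S, #(T.bipartiteAbove G.Adj v) :=
        sum_congr rfl fun v _ ↦ congrArg card <| by ext; simp [and_comm]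
    _ = ∑ u ∈ T, #(S.bipartiteBelow G.Adj u) := sum_card_bipartiteAbove_eq_sum_card_bipartiteBelow _
    _ ≤ ∑ u ∈ T, G.degree u := sum_le_sum fun u _ ↦ card_le_card fun v hv ↦ by
        simpa using ((mem_bipartiteBelow _).mp hv).2.symm

variable [Fintype V] [DecidableRel G.Adj] {k t : ℕ}

theorem filter_not_lt_degree_eq (hk : ∀ v, k ≤ G.degree v) :
    univ.filter (fun v ↦ ¬ k < G.degree v) = univ.filter (fun v ↦ G.degree v = k) :=
  filter_congr fun v _ ↦ not_lt.trans (hk v).ge_iff_eq'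

theorem card_degree_eq_add_card_lt_degree (hk : ∀ v, k ≤ G.degree v) :
    #{v | G.degree v = k} + #{v | k < G.degree v} = Fintype.card V := by
  rw [← filter_not_lt_degree_eq G hk, add_comm, card_filter_add_card_filter_not, card_univ]

theorem card_degree_eq_mul_add_sum_lt_degree (hk : ∀ v, k ≤ G.degree v) :
    #{v | G.degree v = k} * k + ∑ v with k < G.degree v, G.degree v = 2 * #G.edgeFinset := by
  have sum_eq : ∑ v with G.degree v = k, G.degree v = #{v | G.degree v = k} * k :=
    sum_const_nat fun v hv ↦ (mem_filter.mp hv).2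
  rw [← sum_eq, ← filter_not_lt_degree_eq G hk, add_comm, sum_filter_add_sum_filter_not,
    G.sum_degrees_eq_twice_card_edges]

theorem add_div_mul_card_le_two_mul_card_edgeFinset (hk : ∀ v, k ≤ G.degree v)
    (ht : ∀ v, G.degree v = k → t ≤ #{u ∈ G.neighborFinset v | k < G.degree u}) :
    (k + t / (k + t + 1) : ℝ) * Fintype.card V ≤ 2 * #G.edgeFinset := by
  classical
  have low_le : #{v | G.degree v = k} * t ≤ ∑ v with k < G.degree v, G.degree v :=
    card_mul_le_sum_degree_of_le_card_inter G fun v hv ↦ by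
      simpa [inter_filter] using ht v (mem_filter.mp hv).2
  have high_le : #{v | k < G.degree v} * (k + 1) ≤ ∑ v with k < G.degree v, G.degree v :=
    card_nsmul_le_sum _ _ _ fun v hv ↦ Nat.succ_le_of_lt (mem_filter.mp hv).2
  have weighted : (k * (k + t + 1) + t) * Fintype.card V ≤ 2 * #G.edgeFinset * (k + t + 1) := by
    rw [← card_degree_eq_add_card_lt_degree G hk, ← card_degree_eq_mul_add_sum_lt_degree G hk]
    linarith [low_le, Nat.mul_le_mul_left (k + t) high_le]
  rw [add_div' _ _ _ (by positivity), div_mul_eq_mul_div, div_le_iff₀ (by positivity)]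
  exact_mod_cast weighted

theorem stmt12_general
    (h : 2 * (#G.edgeFinset : ℝ) < (k + t / (k + t + 1)) * Fintype.card V) :
    (∃ v, G.degree v < k) ∨
    (∃ v, G.degree v = k ∧ #{u ∈ G.neighborFinset v | k < G.degree u} < t) := by
  contrapose! h
  exact add_div_mul_card_le_two_mul_card_edgeFinset G h.1 h.2

end DegreeCounting

theorem stmt12 {V : Type*} [Fintype V] [DecidableEq V] [Nonempty V] (d : ℕ)
    (G : SimpleGraph V) [DecidableRel G.Adj]
    (h : 2 * (G.edgeFinset.card : ℝ) < (d + 1 + 2 / (d + 4)) * Fintype.card V) :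
    (∃ v, G.degree v ≤ d) ∨
    (∃ v, G.degree v = d + 1 ∧
      ((G.neighborFinset v).filter fun u => d + 1 < G.degree u).card ≤ 1) := by
  have bound_eq :
      (d + 1 + 2 / (d + 4) : ℝ) = (d + 1 : ℕ) + (2 : ℕ) / ((d + 1 : ℕ) + (2 : ℕ) + 1) := by
    push_cast
    ring
  rw [bound_eq] at h
  simpa only [Order.lt_add_one_iff, Order.lt_two_iff] using stmt12_general G h
end

section
/- Let d ≥ 2 be an integer, let G be a finite graph of maximum average degree at most d such that G is (d−1)-choosable, let L be a list assignment for G with |L(v)| ≥ d for all vertices v, and let r be a request for G and L. If dom(r) is an independent set in G, then r is (1/(2d^{2d}))-satisfiable. -/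
def EpsSat {V : Type*} (G : SimpleGraph V) (L : V → Finset ℕ) (D : Finset V)
    (r : V → ℕ) (ε : ℝ) : Prop :=
  ∃ φ : V → ℕ, IsLColoring G L φ ∧ ε * D.card ≤ ((D.filter fun v => φ v = r v).card : ℝ)

/-- The maximum average degree of `G` is at most `x`: every non-null subgraph `H`
satisfies `2|E(H)| ≤ x·|V(H)|`. -/
def MadLE {V : Type*} (G : SimpleGraph V) (x : ℝ) : Prop :=
  ∀ H : G.Subgraph, H.verts.Nonempty → 2 * (H.edgeSet.ncard : ℝ) ≤ x * H.verts.ncard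

/-- The choosability of `G` is at most `k`. -/
def Choosable {V : Type*} (G : SimpleGraph V) (k : ℕ) : Prop :=
  ∀ L : V → Finset ℕ, (∀ v, k ≤ (L v).card) → ∃ φ, IsLColoring G L φ

/-!
Repeatedly delete vertices outside `D` with fewer remaining neighbours than colors; they can be
colored greedily at the end. In the remaining core `S` every vertex outside `D` has degree at least
`d`, so by the bound on the average degree `D` has average degree at most `d` in `S`, and at least
half of the vertices of `D` have degree at most `2d`. Shrink the lists to size `d` and remove from
each of them one color `c u`; by assumption `G` can be colored from what is left. A vertex `v` of
`D` can then be recolored by `r v` as soon as `c u = r v` for every neighbour `u` in `S` whose list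
contains `r v`. For uniformly random `c` and `v` of degree at most `2d` this has probability at
least `d ^ (-2d)`, so some `c` serves a fraction `d ^ (-2d)` of these vertices at once, and they can
be recolored simultaneously because `D` is independent.
-/

section

open Finset Function

section Counting

variable {ι α β : Type*} {S D : Finset ι} {f : ι → ℕ} {d : ℕ}

lemma sum_le_card_mul_of_sum_superset_le [DecidableEq ι] (hDS : D ⊆ S)
    (hsum : ∑ v ∈ S, f v ≤ #S * d) (hf : ∀ v ∈ S \ D, d ≤ f v) :
    ∑ v ∈ D, f v ≤ #D * d := by
  have hsdiff : #(S \ D) * d ≤ ∑ v ∈ S \ D, f v := card_nsmul_le_sum _ _ _ hf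
  rw [← sum_sdiff hDS, ← card_sdiff_add_card_eq_card hDS, add_mul] at hsum
  lia

lemma card_le_two_mul_card_filter_le_two_mul (hd : 0 < d) (hsum : ∑ v ∈ D, f v ≤ #D * d) :
    #D ≤ 2 * #{v ∈ D | f v ≤ 2 * d} := by
  have markov : #{v ∈ D | ¬ f v ≤ 2 * d} * (2 * d) ≤ #D * d :=
    calc #{v ∈ D | ¬ f v ≤ 2 * d} * (2 * d)
      _ ≤ ∑ v ∈ D with ¬ f v ≤ 2 * d, f v :=
        card_nsmul_le_sum _ _ _ fun v hv => (not_le.mp (mem_filter.mp hv).2).le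
      _ ≤ ∑ v ∈ D, f v := sum_le_sum_of_subset (filter_subset _ _)
      _ ≤ #D * d := hsum
  have hhigh : #{v ∈ D | ¬ f v ≤ 2 * d} * 2 ≤ #D :=
    le_of_mul_le_mul_right (by rwa [mul_assoc]) hd
  have hsplit := card_filter_add_card_filter_not (s := D) fun v => f v ≤ 2 * d
  lia

lemma exists_card_le_card_filter_mul {Ω : Finset α} (hΩ : Ω.Nonempty) (A : Finset β)
    (R : α → β → Prop) [∀ a b, Decidable (R a b)] {k : ℕ}
    (hR : ∀ b ∈ A, #Ω ≤ #{a ∈ Ω | R a b} * k) :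
    ∃ a ∈ Ω, #A ≤ #{b ∈ A | R a b} * k := by
  refine exists_le_of_sum_le hΩ ?_
  calc ∑ _a ∈ Ω, #A
    _ = ∑ _b ∈ A, #Ω := by simp only [sum_const, smul_eq_mul, mul_comm]
    _ ≤ ∑ b ∈ A, #{a ∈ Ω | R a b} * k := sum_le_sum hR
    _ = ∑ a ∈ Ω, #{b ∈ A | R a b} * k := by
      rw [← sum_mul, ← sum_mul]
      exact congrArg (· * k) (sum_card_bipartiteAbove_eq_sum_card_bipartiteBelow R).symm

variable [Fintype ι] [DecidableEq ι] [DecidableEq α]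

lemma card_filter_piFinset_forall_eq_mul_prod (L : ι → Finset α) (T : Finset ι) (a : ι → α)
    (ha : ∀ i ∈ T, a i ∈ L i) :
    #{c ∈ Fintype.piFinset L | ∀ i ∈ T, c i = a i} * ∏ i ∈ T, #(L i) =
      #(Fintype.piFinset L) := by
  have hfilter : {c ∈ Fintype.piFinset L | ∀ i ∈ T, c i = a i} =
      Fintype.piFinset fun i => if i ∈ T then {a i} else L i := by
    ext c
    simp only [mem_filter, Fintype.mem_piFinset, ← forall_and]
    refine forall_congr' fun i => ?_
    by_cases hi : i ∈ T
    · simpa [hi] using fun h => h ▸ ha i hi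
    · simp [hi]
  rw [hfilter, Fintype.card_piFinset, Fintype.card_piFinset, ← Fintype.prod_ite_mem T,
    ← prod_mul_distrib]
  refine prod_congr rfl fun i _ => ?_
  split_ifs <;> simp

lemma exists_mem_piFinset_card_le_card_filter_mul_pow {L : ι → Finset α} (hd : 0 < d)
    (hne : ∀ i, (L i).Nonempty) (hL : ∀ i, #(L i) ≤ d) (A : Finset β) (T : β → Finset ι)
    (a : β → α) {k : ℕ} (hT : ∀ b ∈ A, #(T b) ≤ k) (ha : ∀ b ∈ A, ∀ i ∈ T b, a b ∈ L i) :
    ∃ c ∈ Fintype.piFinset L, #A ≤ #{b ∈ A | ∀ i ∈ T b, c i = a b} * d ^ k := by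
  refine exists_card_le_card_filter_mul (Fintype.piFinset_nonempty.mpr hne) A
    (fun c b => ∀ i ∈ T b, c i = a b) fun b hb => ?_
  rw [← card_filter_piFinset_forall_eq_mul_prod L (T b) (fun _ => a b) (ha b hb)]
  gcongr
  calc ∏ i ∈ T b, #(L i)
    _ ≤ d ^ #(T b) := prod_le_pow_card _ _ _ fun i _ => hL i
    _ ≤ d ^ k := Nat.pow_le_pow_right hd (hT b hb)

end Counting

variable {V : Type*} {G : SimpleGraph V} {L : V → Finset ℕ} {S B D : Finset V} {φ r : V → ℕ}

variable (G) in
lemma ncard_edgeSet_induce_top (s : Set V) :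
    ((⊤ : G.Subgraph).induce s).edgeSet.ncard = (G.induce s).edgeSet.ncard := by
  rw [G.induce_eq_coe_induce_top, ← SimpleGraph.Subgraph.image_coe_edgeSet_coe]
  exact Set.ncard_image_of_injective _ (Sym2.map.injective Subtype.val_injective)

variable (G) in
lemma sum_card_filter_adj_eq_two_mul_ncard_edgeSet_induce [DecidableRel G.Adj] (S : Finset V) :
    ∑ v ∈ S, #{w ∈ S | G.Adj v w} = 2 * (G.induce (S : Set V)).edgeSet.ncard := by
  classical
  have hdegree (v : S) : #{w ∈ S | G.Adj v w} = (G.induce (S : Set V)).degree v := by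
    rw [← SimpleGraph.card_neighborFinset_eq_degree, ← card_map (.subtype (· ∈ (S : Set V)))]
    congr 1
    ext w
    simp [and_comm]
  calc ∑ v ∈ S, #{w ∈ S | G.Adj v w}
    _ = ∑ v : (S : Set V), #{w ∈ S | G.Adj v w} := (sum_coe_sort S _).symm
    _ = ∑ v, (G.induce (S : Set V)).degree v := sum_congr rfl fun v _ => hdegree v
    _ = 2 * (G.induce (S : Set V)).edgeSet.ncard := by
      rw [SimpleGraph.sum_degrees_eq_twice_card_edges, ← SimpleGraph.coe_edgeFinset,
        Set.ncard_coe_finset]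

lemma MadLE.sum_card_adj_le [DecidableRel G.Adj] {x : ℝ} (h : MadLE G x) (S : Finset V) :
    ((∑ v ∈ S, #{w ∈ S | G.Adj v w} : ℕ) : ℝ) ≤ x * #S := by
  rcases S.eq_empty_or_nonempty with rfl | hS
  · simp
  have hmad := h ((⊤ : G.Subgraph).induce S) hS
  rw [ncard_edgeSet_induce_top, SimpleGraph.Subgraph.induce_verts, Set.ncard_coe_finset] at hmad
  rw [sum_card_filter_adj_eq_two_mul_ncard_edgeSet_induce]
  exact_mod_cast hmad

lemma MadLE.card_le_two_mul_card_filter_card_adj_le [DecidableEq V]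
    [DecidableRel G.Adj] {d : ℕ} (h : MadLE G d) (hd : 0 < d) (hDS : D ⊆ S)
    (hS : ∀ v ∈ S \ D, d ≤ #{w ∈ S | G.Adj v w}) :
    #D ≤ 2 * #{v ∈ D | #{w ∈ S | G.Adj v w} ≤ 2 * d} := by
  have hsum : ∑ v ∈ S, #{w ∈ S | G.Adj v w} ≤ #S * d := by
    rw [mul_comm]
    exact_mod_cast h.sum_card_adj_le S
  exact card_le_two_mul_card_filter_le_two_mul hd
    (sum_le_card_mul_of_sum_superset_le hDS hsum hS)

/-- The restriction of `φ` to `S` is an `L`-coloring of the subgraph of `G` induced by `S`; the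
values of `φ` outside `S` are irrelevant. Total functions are used for partial colorings so that
they can be extended one vertex at a time by `Function.update`. -/
def IsLColoringOn (G : SimpleGraph V) (L : V → Finset ℕ) (S : Finset V) (φ : V → ℕ) : Prop :=
  (∀ v ∈ S, φ v ∈ L v) ∧ ∀ u ∈ S, ∀ w ∈ S, G.Adj u w → φ u ≠ φ w

lemma isLColoringOn_univ [Fintype V] : IsLColoringOn G L univ φ ↔ IsLColoring G L φ := by
  simp [IsLColoringOn, IsLColoring]

lemma IsLColoringOn.exists_update_of_card_adj_lt [DecidableEq V] [DecidableRel G.Adj] {u : V}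
    (hφ : IsLColoringOn G L (S.erase u) φ) (hu : #{w ∈ S | G.Adj u w} < #(L u)) :
    ∃ a, IsLColoringOn G L S (update φ u a) := by
  obtain ⟨a, haL, ha⟩ : ∃ a ∈ L u, a ∉ {w ∈ S | G.Adj u w}.image φ :=
    exists_mem_notMem_of_card_lt_card (card_image_le.trans_lt hu)
  have ha_ne : ∀ w ∈ S, G.Adj u w → a ≠ φ w := fun w hw huw haw =>
    ha (mem_image.mpr ⟨w, mem_filter.mpr ⟨hw, huw⟩, haw.symm⟩)
  refine ⟨a, fun v hv => ?_, fun v hv w hw hvw => ?_⟩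
  · obtain rfl | hvu := eq_or_ne v u
    · simpa using haL
    · simpa [hvu] using hφ.1 v (mem_erase.mpr ⟨hvu, hv⟩)
  · obtain rfl | hvu := eq_or_ne v u
    · simpa [hvw.ne'] using ha_ne w hw hvw
    obtain rfl | hwu := eq_or_ne w u
    · simpa [hvu] using (ha_ne v hv hvw.symm).symm
    · simpa [hvu, hwu] using
        hφ.2 v (mem_erase.mpr ⟨hvu, hv⟩) w (mem_erase.mpr ⟨hwu, hw⟩) hvw

lemma IsLColoring.isLColoringOn_piecewise [DecidableEq V] (hφ : IsLColoring G L φ)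
    (hr : ∀ v ∈ B, r v ∈ L v) (hB : ∀ u ∈ B, ∀ v ∈ B, ¬ G.Adj u v)
    (hne : ∀ v ∈ B, ∀ w ∈ S, G.Adj v w → φ w ≠ r v) :
    IsLColoringOn G L S (B.piecewise r φ) := by
  refine ⟨fun v _ => ?_, fun u hu w hw huw => ?_⟩
  · by_cases hvB : v ∈ B
    · simpa [hvB] using hr v hvB
    · simpa [hvB] using hφ.1 v
  · by_cases huB : u ∈ B <;> by_cases hwB : w ∈ B <;>
      simp only [piecewise, huB, hwB, if_true, if_false]
    · exact absurd huw (hB u huB w hwB)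
    · exact (hne u huB w hw huw).symm
    · exact hne w hwB u hu huw.symm
    · exact hφ.2 huw

variable (G L) in
lemma exists_superset_card_le_card_adj_and_extends [Finite V] [DecidableEq V]
    [DecidableRel G.Adj] (D : Finset V) :
    ∃ S, D ⊆ S ∧ (∀ v ∈ S \ D, #(L v) ≤ #{w ∈ S | G.Adj v w}) ∧
      ∀ φ, IsLColoringOn G L S φ → ∃ ψ, IsLColoring G L ψ ∧ Set.EqOn ψ φ S := by
  cases nonempty_fintype V
  -- In a minimal extendable `S`, a vertex outside `D` with spare colors could still be deleted.
  obtain ⟨S, ⟨hDS, hext⟩, hmin⟩ := exists_minimal_of_wellFoundedLT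
    (fun S => D ⊆ S ∧ ∀ φ, IsLColoringOn G L S φ → ∃ ψ, IsLColoring G L ψ ∧ Set.EqOn ψ φ S)
    ⟨univ, subset_univ D, fun φ hφ => ⟨φ, isLColoringOn_univ.mp hφ, Set.eqOn_refl _ _⟩⟩
  refine ⟨S, hDS, fun v hv => ?_, hext⟩
  obtain ⟨hvS, hvD⟩ := mem_sdiff.mp hv
  by_contra! hlt
  refine notMem_erase v S (hmin ⟨subset_erase.mpr ⟨hDS, hvD⟩, fun φ hφ => ?_⟩
    (erase_subset v S) hvS)
  obtain ⟨a, ha⟩ := hφ.exists_update_of_card_adj_lt hlt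
  obtain ⟨ψ, hψ, hψS⟩ := hext _ ha
  refine ⟨ψ, hψ, fun w hw => ?_⟩
  obtain ⟨hwv, hwS⟩ := mem_erase.mp hw
  rw [hψS hwS, update_of_ne hwv]

lemma Choosable.exists_isLColoringOn_card_le_card_filter_mul_pow [Finite V]
    [DecidableRel G.Adj] {d k : ℕ} (hch : Choosable G (d - 1)) (hd : 0 < d) (hL : ∀ v, d ≤ #(L v))
    (hr : ∀ v ∈ D, r v ∈ L v) (hind : ∀ u ∈ D, ∀ v ∈ D, ¬ G.Adj u v)
    (hdeg : ∀ v ∈ D, #{w ∈ S | G.Adj v w} ≤ k) :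
    ∃ φ, IsLColoringOn G L S φ ∧ #D ≤ #{v ∈ D | φ v = r v} * d ^ k := by
  classical
  cases nonempty_fintype V
  choose L' hL'L hL' using fun v => exists_subset_card_eq (hL v)
  let T : V → Finset V := fun v => {w ∈ S | G.Adj v w ∧ r v ∈ L' w}
  obtain ⟨c, hc, hcard⟩ := exists_mem_piFinset_card_le_card_filter_mul_pow (L := L') hd
    (fun v => card_pos.mp (hd.trans_eq (hL' v).symm)) (fun v => (hL' v).le) D T r
    (fun v hv => (card_le_card (monotone_filter_right S fun _ _ h => h.1)).trans (hdeg v hv))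
    (fun v _ w hw => (mem_filter.mp hw).2.2)
  obtain ⟨ψ, hψL', hψ⟩ := hch (fun v => (L' v).erase (c v)) fun v => by
    rw [card_erase_of_mem (Fintype.mem_piFinset.mp hc v), hL']
  set B : Finset V := {v ∈ D | ∀ w ∈ T v, c w = r v}
  have hBD : B ⊆ D := filter_subset _ _
  have hψ_ne : ∀ v ∈ B, ∀ w ∈ S, G.Adj v w → ψ w ≠ r v := fun v hv w hw hvw heq => by
    obtain ⟨hne, hmem⟩ := mem_erase.mp (hψL' w)
    rw [heq] at hne hmem
    exact hne ((mem_filter.mp hv).2 w (mem_filter.mpr ⟨hw, hvw, hmem⟩)).symm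
  have hψL : IsLColoring G L ψ := ⟨fun v => hL'L v (mem_of_mem_erase (hψL' v)), hψ⟩
  refine ⟨B.piecewise r ψ, hψL.isLColoringOn_piecewise (fun v hv => hr v (hBD hv))
    (fun u hu v hv => hind u (hBD hu) v (hBD hv)) hψ_ne, hcard.trans ?_⟩
  gcongr
  exact fun v hv => mem_filter.mpr ⟨hBD hv, piecewise_eq_of_mem _ _ _ hv⟩

end

theorem stmt14 {V : Type*} [Fintype V] (d : ℕ) (hd : 2 ≤ d) (G : SimpleGraph V)
    (hmad : MadLE G d) (hch : Choosable G (d - 1)) (L : V → Finset ℕ)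
    (hL : ∀ v, d ≤ (L v).card) (D : Finset V) (r : V → ℕ)
    (hr : ∀ v ∈ D, r v ∈ L v)
    (hind : ∀ u ∈ D, ∀ v ∈ D, ¬ G.Adj u v) :
    EpsSat G L D r (1 / (2 * d ^ (2 * d))) := by
  classical
  have hd' : 0 < d := by lia
  obtain ⟨S, hDS, hcore, hextend⟩ := exists_superset_card_le_card_adj_and_extends G L D
  let A : Finset V := {v ∈ D | (S.filter (G.Adj v)).card ≤ 2 * d}
  have hAD : A ⊆ D := Finset.filter_subset _ _
  have hhalf : D.card ≤ 2 * A.card :=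
    hmad.card_le_two_mul_card_filter_card_adj_le hd' hDS fun v hv => (hL v).trans (hcore v hv)
  obtain ⟨φ, hφ, hcard⟩ := hch.exists_isLColoringOn_card_le_card_filter_mul_pow hd' hL
    (fun v hv => hr v (hAD hv)) (fun u hu v hv => hind u (hAD hu) v (hAD hv))
    fun v hv => (Finset.mem_filter.mp hv).2
  obtain ⟨ψ, hψ, hψφ⟩ := hextend φ hφ
  refine ⟨ψ, hψ, ?_⟩
  have hsub : {v ∈ A | φ v = r v} ⊆ {v ∈ D | ψ v = r v} := fun v hv => by
    obtain ⟨hvA, hv⟩ := Finset.mem_filter.mp hv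
    exact Finset.mem_filter.mpr ⟨hAD hvA, (hψφ (hDS (hAD hvA))).trans hv⟩
  have hnat : D.card ≤ 2 * d ^ (2 * d) * {v ∈ D | ψ v = r v}.card :=
    calc D.card
      _ ≤ 2 * ({v ∈ A | φ v = r v}.card * d ^ (2 * d)) := by lia
      _ ≤ 2 * ({v ∈ D | ψ v = r v}.card * d ^ (2 * d)) := by gcongr
      _ = 2 * d ^ (2 * d) * {v ∈ D | ψ v = r v}.card := by ring
  rw [one_div, inv_mul_le_iff₀ (by positivity)]
  exact_mod_cast hnat
end

section
/- Let d be a positive integer and let r : {1,…,d} → Z≥0 be a function such that Σ_{i=1}^d r(i) = d. For a bijection π ∈ S_d^0, the function π + r (defined pointwise) belongs to S_d if and only if for every t ∈ {1,…,d} with r(t) > 0 one has π(t) = Σ_{j : π(j) < π(t)} r(j). -/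
/-!
Write `R n` for the sum of `r j` over all `j` with `π j < n`. As `π j ≤ π j + r j`, only indices
with `π j ≤ n` can reach a value in `[1, n]`; if `n = d`, or if `n = π t` with `r t > 0`, equality
is excluded and `π + r` maps `{j | π j < n}` bijectively onto `[1, n]`. Comparing sums with the
bijection `π : {j | π j < n} → [0, n)` gives `R n = n`.

Conversely, let `1 ≤ n ≤ d`. Either `n = π t` with `r t = 0`, and `π + r` takes the value `n` at
`t`, or `R n = n > 0`. In the latter case let `t` maximise `π t` subject to `π t < n` and
`r t > 0`. Then `n = R n = R (π t) + r t = π t + r t`. So `π + r` is onto `[1, d]`, and it is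
injective by counting.
-/

open Finset

section

variable {ι α : Type*}

theorem bijOn_of_surjOn_of_card_le {f : ι → α} {s : Finset ι} {t : Finset α}
    (hsurj : Set.SurjOn f s t) (hcard : #s ≤ #t) : Set.BijOn f s t := by
  classical
  have himage : t = s.image f :=
    eq_of_subset_of_card_le (fun _ hv ↦ mem_image.2 (hsurj hv))
      (card_image_le.trans hcard)
  have hmaps : Set.MapsTo f s t := fun i hi ↦ himage ▸ mem_image_of_mem f hi
  exact ⟨hmaps, injOn_of_surjOn_of_card_le f hmaps hsurj hcard, hsurj⟩

theorem sum_eq_of_bijOn_range_of_bijOn_Icc {π r : ι → ℕ} {s : Finset ι} {n : ℕ}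
    (hπ : Set.BijOn π s (range n)) (hπr : Set.BijOn (π + r) s (Icc 1 n)) :
    ∑ j ∈ s, r j = n := by
  have hsum : ∑ j ∈ s, π j + ∑ j ∈ s, r j = ∑ j ∈ s, π j + n :=
    calc ∑ j ∈ s, π j + ∑ j ∈ s, r j
      _ = ∑ j ∈ s, (π + r) j := sum_add_distrib.symm
      _ = ∑ v ∈ Icc 1 n, v := sum_nbij (π + r) hπr.mapsTo hπr.injOn hπr.surjOn fun _ _ ↦ rfl
      _ = ∑ k ∈ range n, (k + 1) := by
        rw [range_eq_Ico, sum_Ico_add' (fun v ↦ v), zero_add, Ico_add_one_right_eq_Icc]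
      _ = ∑ k ∈ range n, k + n := by simp [sum_add_distrib]
      _ = ∑ j ∈ s, π j + n := by
        rw [sum_nbij (g := fun k ↦ k) π hπ.mapsTo hπ.injOn hπ.surjOn fun _ _ ↦ rfl]
  exact Nat.add_left_cancel hsum

theorem surjOn_setOf_lt_of_forall_ne_zero {π r : ι → ℕ} {n : ℕ}
    (hsurj : Set.SurjOn (π + r) Set.univ (Set.Icc 1 n)) (hne : ∀ j, π j = n → r j ≠ 0) :
    Set.SurjOn (π + r) {j | π j < n} (Set.Icc 1 n) := by
  intro v hv
  obtain ⟨j, -, rfl⟩ := hsurj hv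
  have hle : π j + r j ≤ n := hv.2
  exact ⟨j, show π j < n by grind, rfl⟩

end

section

variable {ι : Type*} [Fintype ι]

theorem sum_filter_lt_eq_of_surjOn {π r : ι → ℕ} (hπ : Function.Injective π) {n : ℕ}
    (hsurj : Set.SurjOn (π + r) {j | π j < n} (Set.Icc 1 n)) :
    ∑ j with π j < n, r j = n := by
  have hmaps : Set.MapsTo π ({j | π j < n} : Finset ι) (range n) := fun j hj ↦ by simpa using hj
  have hle : #{j | π j < n} ≤ n := by
    simpa using card_le_card_of_injOn π hmaps hπ.injOn
  have hbij : Set.BijOn (π + r) ({j | π j < n} : Finset ι) (Icc 1 n) :=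
    bijOn_of_surjOn_of_card_le (by simpa using hsurj) (by simpa using hle)
  have hge : n ≤ #{j | π j < n} := by
    simpa using card_le_card_of_surjOn (π + r) hbij.surjOn
  exact sum_eq_of_bijOn_range_of_bijOn_Icc
    ⟨hmaps, hπ.injOn, surjOn_of_injOn_of_card_le π hmaps hπ.injOn (by simpa using hge)⟩ hbij

theorem sum_filter_lt_eq_add {α M : Type*} [LinearOrder α] [AddCommMonoid M] {π : ι → α}
    (hπ : Function.Injective π) {r : ι → M} {t : ι} {a : α} (hta : π t < a)
    (hr : ∀ j, π t < π j → π j < a → r j = 0) :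
    ∑ j with π j < a, r j = ∑ j with π j < π t, r j + r t := by
  classical
  have hsubset : insert t ({j | π j < π t} : Finset ι) ⊆ ({j | π j < a} : Finset ι) := by
    grind
  have hzero : ∀ j ∈ ({j | π j < a} : Finset ι), j ∉ insert t ({j | π j < π t} : Finset ι) →
      r j = 0 := by
    intro j hja hj
    simp only [mem_insert, mem_filter_univ, not_or, not_lt] at hja hj
    exact hr j (hj.2.lt_of_ne (hπ.ne (Ne.symm hj.1))) hja
  rw [← sum_subset hsubset hzero, sum_insert (by simp), add_comm]

theorem exists_add_eq_of_sum_filter_lt_eq {π r : ι → ℕ} (hπ : Function.Injective π)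
    (h : ∀ t, 0 < r t → π t = ∑ j with π j < π t, r j) {n : ℕ} (hn : 0 < n)
    (hsum : ∑ j with π j < n, r j = n) : ∃ t, π t + r t = n := by
  obtain ⟨i, hi, hri⟩ : ∃ i ∈ ({j | π j < n} : Finset ι), r i ≠ 0 :=
    exists_ne_zero_of_sum_ne_zero (hsum.trans_ne hn.ne')
  obtain ⟨t, ht, hmax⟩ := exists_max_image {j | π j < n ∧ 0 < r j} π
    ⟨i, by simpa [Nat.pos_iff_ne_zero, hri] using hi⟩
  simp only [mem_filter_univ] at ht hmax
  refine ⟨t, ?_⟩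
  calc π t + r t
    _ = ∑ j with π j < π t, r j + r t := by rw [← h t ht.2]
    _ = ∑ j with π j < n, r j := by
      refine (sum_filter_lt_eq_add hπ ht.1 fun j htj hjn ↦ ?_).symm
      exact Nat.eq_zero_of_not_pos fun hrj ↦ (hmax j ⟨hjn, hrj⟩).not_gt htj
    _ = n := hsum

theorem surjOn_Icc_iff_sum_eq_and_forall {π r : ι → ℕ} (hπ : Function.Injective π) {d : ℕ}
    (hπd : Set.range π = Set.Iio d) :
    Set.SurjOn (π + r) Set.univ (Set.Icc 1 d) ↔
      ∑ i, r i = d ∧ ∀ t, 0 < r t → π t = ∑ j with π j < π t, r j := by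
  have hπlt : ∀ i, π i < d := Set.range_subset_iff.1 hπd.subset
  have htotal : ∑ j with π j < d, r j = ∑ i, r i := by simp [hπlt]
  constructor
  · intro hsurj
    refine ⟨htotal ▸ sum_filter_lt_eq_of_surjOn hπ ?_, fun t ht ↦
      (sum_filter_lt_eq_of_surjOn hπ ?_).symm⟩
    · exact surjOn_setOf_lt_of_forall_ne_zero hsurj fun j hj ↦ absurd hj (hπlt j).ne
    · refine surjOn_setOf_lt_of_forall_ne_zero
        (hsurj.mono subset_rfl (Set.Icc_subset_Icc_right (hπlt t).le)) fun j hj ↦ ?_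
      exact hπ hj ▸ ht.ne'
  · rintro ⟨hr, h⟩ n ⟨hn, hnd⟩
    suffices ∃ t, π t + r t = n from this.imp fun t ht ↦ ⟨Set.mem_univ t, ht⟩
    obtain rfl | hlt := hnd.eq_or_lt
    · exact exists_add_eq_of_sum_filter_lt_eq hπ h hn (htotal.trans hr)
    obtain ⟨t, rfl⟩ : n ∈ Set.range π := hπd ▸ hlt
    obtain hrt | hrt := (r t).eq_zero_or_pos
    · exact ⟨t, by rw [hrt, add_zero]⟩
    · exact exists_add_eq_of_sum_filter_lt_eq hπ h hn (h t hrt).symm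

theorem stmt15_general (π r : ι → ℕ) (hπinj : Function.Injective π)
    (hπlt : ∀ i, π i < Fintype.card ι) :
    (Function.Injective (fun i ↦ π i + r i) ∧
        ∀ i, 1 ≤ π i + r i ∧ π i + r i ≤ Fintype.card ι) ↔
      ∑ i, r i = Fintype.card ι ∧ ∀ t, 0 < r t → π t = ∑ j with π j < π t, r j := by
  have hπrange : Set.range π = Set.Iio (Fintype.card ι) := by
    have hsurj : Set.SurjOn π (univ : Finset ι) (range (Fintype.card ι)) :=
      surjOn_of_injOn_of_card_le π (fun i _ ↦ by simpa using hπlt i) hπinj.injOn (by simp)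
    exact (Set.range_subset_iff.2 hπlt).antisymm (by simpa [Set.SurjOn] using hsurj)
  rw [← surjOn_Icc_iff_sum_eq_and_forall hπinj hπrange]
  constructor
  · rintro ⟨hinj, hmem⟩
    simpa using surjOn_of_injOn_of_card_le (s := univ) (t := Icc 1 (Fintype.card ι)) (π + r)
      (fun i _ ↦ by simpa using hmem i) hinj.injOn (by simp)
  · intro hsurj
    have hbij : Set.BijOn (π + r) (univ : Finset ι) (Icc 1 (Fintype.card ι)) :=
      bijOn_of_surjOn_of_card_le (by simpa using hsurj) (by simp)
    exact ⟨Set.injOn_univ.1 (coe_univ (α := ι) ▸ hbij.injOn),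
      fun i ↦ mem_Icc.1 (hbij.mapsTo (mem_univ i))⟩

end

/-- `π` is a bijection from `{1,…,d}` (indexed by `Fin d`) onto `{0,…,d-1}`,
`π + r ∈ S_d` means `fun i => π i + r i` is a bijection onto `{1,…,d}`. -/
theorem stmt15 (d : ℕ) (hd : 0 < d) (r : Fin d → ℕ) (hr : ∑ i, r i = d)
    (π : Fin d → ℕ) (hπinj : Function.Injective π) (hπlt : ∀ i, π i < d) :
    (Function.Injective (fun i => π i + r i) ∧ ∀ i, 1 ≤ π i + r i ∧ π i + r i ≤ d) ↔
      ∀ t : Fin d, 0 < r t →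
        π t = ∑ j ∈ Finset.univ.filter fun j => π j < π t, r j := by
  simpa [hr] using stmt15_general π r hπinj (by simpa using hπlt)
end

section
/- Let d be a positive integer and let r : {1,…,d} → Z≥0 be a function such that Σ_{i=1}^d r(i) = d. Let R = {t ∈ {1,…,d} : r(t) > 0} and k = |R|. Then there are exactly k!·(d−k)! bijections π ∈ S_d^0 such that π + r ∈ S_d, and moreover sgn(π)·sgn(π + r) = (−1)^{k+d} for each such bijection π. -/
/-- The sign of a bijection `π` (given by its inversion count). -/
def bijSign (d : ℕ) (π : Fin d → ℕ) : ℤ :=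
  (-1) ^ (Finset.univ.filter fun p : Fin d × Fin d => p.1 < p.2 ∧ π p.2 < π p.1).card

/-!
For a bijection `π` onto `{0, …, d-1}`, the sum `π + r` is a bijection onto `{1, …, d}` exactly when
the intervals `[π t, π t + r t)` partition `{0, …, d-1}`: the number of left endpoints `≤ y` must
exceed the number of right endpoints `≤ y` by one, for every `y < d`.

The nonempty intervals are laid out one after the other, so the values of `π` on the `k` indices
with `r t > 0` amount to an ordering of these indices, and the remaining `d - k` values can be
distributed arbitrarily: this gives `k! (d-k)!`.

Adding `r` reverses the order of two indices `i`, `j` with `π i < π j` exactly when `r j = 0` and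
`π j` lies in the interval of `i`. For each of the `d - k` indices `j` with `r j = 0`, the value
`π j` lies in exactly one interval, so `d - k` pairs are reversed.
-/

open Finset Function
open scoped Nat

section Tiling

variable {ι : Type*} {n : ℕ} {ℓ f : ι → ℕ}

/-- The intervals `[f s, f s + ℓ s)` partition `{0, …, n-1}`, so that `f` gives the starting points
of tiles of lengths `ℓ`. Tiles of length zero are allowed; they are empty and may start anywhere in
`{0, …, n}`. -/
structure IsTiling (n : ℕ) (ℓ f : ι → ℕ) : Prop where
  add_le : ∀ s, f s + ℓ s ≤ n
  existsUnique_mem : ∀ y < n, ∃! s, y ∈ Ico (f s) (f s + ℓ s)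

theorem IsTiling.eq_of_mem (h : IsTiling n ℓ f) {y : ℕ} {s t : ι}
    (hs : y ∈ Ico (f s) (f s + ℓ s)) (ht : y ∈ Ico (f t) (f t + ℓ t)) : s = t :=
  (h.existsUnique_mem y ((mem_Ico.1 hs).2.trans_le (h.add_le s))).unique hs ht

theorem IsTiling.injective (h : IsTiling n ℓ f) (hℓ : ∀ t, 0 < ℓ t) : Injective f :=
  fun s t hst => h.eq_of_mem (y := f s) (by simp [hℓ s]) (by simp [hst, hℓ t])

theorem IsTiling.add_le_of_lt (h : IsTiling n ℓ f) {s t : ι} (ht : 0 < ℓ t) (hst : f s < f t) :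
    f s + ℓ s ≤ f t := by
  by_contra! hlt
  exact hst.ne (congrArg f (h.eq_of_mem (y := f t) (by simp [hst.le, hlt]) (by simp [ht])))

theorem isTiling_subtype_pos_iff (hf : ∀ s, f s ≤ n) :
    IsTiling n (fun t : {t // 0 < ℓ t} => ℓ t) (fun t => f t) ↔ IsTiling n ℓ f := by
  have pos_of_mem {y : ℕ} {s : ι} (hs : y ∈ Ico (f s) (f s + ℓ s)) : 0 < ℓ s := by
    rw [mem_Ico] at hs
    omega
  refine ⟨fun h => ⟨fun s => ?_, fun y hy => ?_⟩, fun h => ⟨fun s => h.add_le s, fun y hy => ?_⟩⟩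
  · rcases Nat.eq_zero_or_pos (ℓ s) with hs | hs
    · simpa [hs] using hf s
    · exact h.add_le ⟨s, hs⟩
  · obtain ⟨s, hs, huniq⟩ := h.existsUnique_mem y hy
    exact ⟨s, hs, fun t ht => congrArg Subtype.val (huniq ⟨t, pos_of_mem ht⟩ ht)⟩
  · obtain ⟨s, hs, huniq⟩ := h.existsUnique_mem y hy
    exact ⟨⟨s, pos_of_mem hs⟩, hs, fun t ht => Subtype.ext (huniq t ht)⟩

variable [Fintype ι]

theorem isTiling_of_pairwise_disjoint (hle : ∀ s, f s + ℓ s ≤ n)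
    (hdisj : Pairwise (Disjoint on fun s => Ico (f s) (f s + ℓ s))) (hsum : ∑ s, ℓ s = n) :
    IsTiling n ℓ f := by
  have hcover : univ.biUnion (fun s => Ico (f s) (f s + ℓ s)) = range n := by
    refine eq_of_subset_of_card_le (fun y hy => ?_) ?_
    · obtain ⟨s, -, hs⟩ := mem_biUnion.1 hy
      exact mem_range.2 ((mem_Ico.1 hs).2.trans_le (hle s))
    · rw [card_biUnion fun s _ t _ hst => hdisj hst]
      simp [hsum]
  refine ⟨hle, fun y hy => ?_⟩
  obtain ⟨s, -, hs⟩ := mem_biUnion.1 (hcover ▸ mem_range.2 hy)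
  exact ⟨s, hs, fun t ht => hdisj.eq (not_disjoint_iff.2 ⟨y, ht, hs⟩)⟩

end Tiling

section BlockStart

variable {ι α : Type*} [Fintype ι] [LinearOrder α] {n : ℕ} {ℓ : ι → ℕ} {a : ι → α} {s t : ι}

/-- The starting point of the tile `t` when tiles of lengths `ℓ` are laid out from `0` onwards in
the order of their keys `a`. -/
def blockStart (ℓ : ι → ℕ) (a : ι → α) (t : ι) : ℕ :=
  ∑ s with a s < a t, ℓ s

theorem blockStart_add_le_sum {A : Finset ι} (ht : t ∈ A) (hA : ∀ s, a s < a t → s ∈ A) :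
    blockStart ℓ a t + ℓ t ≤ ∑ s ∈ A, ℓ s := by
  classical
  have hsub : insert t ({s | a s < a t} : Finset ι) ⊆ A :=
    insert_subset ht fun s hs => hA s (mem_filter.1 hs).2
  calc blockStart ℓ a t + ℓ t = ∑ s ∈ insert t ({s | a s < a t} : Finset ι), ℓ s := by
        rw [sum_insert (by simp), add_comm, blockStart]
    _ ≤ ∑ s ∈ A, ℓ s := sum_le_sum_of_subset hsub

theorem blockStart_add_le_blockStart (hst : a s < a t) :
    blockStart ℓ a s + ℓ s ≤ blockStart ℓ a t :=
  blockStart_add_le_sum (by simpa using hst) fun u hu => by simpa using hu.trans hst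

theorem blockStart_le_blockStart (hst : a s ≤ a t) : blockStart ℓ a s ≤ blockStart ℓ a t :=
  sum_le_sum_of_subset fun u hu => by simpa using (mem_filter.1 hu).2.trans_le hst

theorem blockStart_lt_blockStart_iff (hℓ : 0 < ℓ s) :
    blockStart ℓ a s < blockStart ℓ a t ↔ a s < a t := by
  refine ⟨fun h => ?_, fun h => ?_⟩
  · contrapose! h
    exact blockStart_le_blockStart h
  · have := blockStart_add_le_blockStart (ℓ := ℓ) h
    omega

theorem isTiling_blockStart (ℓ : ι → ℕ) (ha : Injective a) :
    IsTiling (∑ s, ℓ s) ℓ (blockStart ℓ a) := by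
  refine isTiling_of_pairwise_disjoint
    (fun s => blockStart_add_le_sum (mem_univ s) fun u _ => mem_univ u) (fun s t hst => ?_) rfl
  refine disjoint_left.2 fun y hs ht => ?_
  rw [mem_Ico] at hs ht
  rcases (ha.ne hst).lt_or_gt with h | h <;>
  · have := blockStart_add_le_blockStart (ℓ := ℓ) h
    omega

theorem IsTiling.blockStart_eq {f : ι → ℕ} (h : IsTiling n ℓ f) (hℓ : ∀ t, 0 < ℓ t) :
    blockStart ℓ f = f := by
  funext t
  have hcover : ({s | f s < f t} : Finset ι).biUnion (fun s => Ico (f s) (f s + ℓ s)) =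
      range (f t) := by
    ext y
    simp only [mem_biUnion, mem_filter_univ, mem_range]
    constructor
    · rintro ⟨s, hst, hy⟩
      exact (mem_Ico.1 hy).2.trans_le (h.add_le_of_lt (hℓ t) hst)
    · intro hy
      obtain ⟨s, hs, -⟩ := h.existsUnique_mem y (hy.trans_le (le_of_add_le_left (h.add_le t)))
      exact ⟨s, (mem_Ico.1 hs).1.trans_lt hy, hs⟩
  have hdisj : (({s | f s < f t} : Finset ι) : Set ι).PairwiseDisjoint
      fun s => Ico (f s) (f s + ℓ s) :=
    fun s _ u _ hsu => disjoint_left.2 fun y hs hu => hsu (h.eq_of_mem hs hu)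
  calc blockStart ℓ f t = ∑ s with f s < f t, #(Ico (f s) (f s + ℓ s)) := by simp [blockStart]
    _ = f t := by rw [← card_biUnion hdisj, hcover, card_range]

theorem blockStart_equiv_injective (hℓ : ∀ t, 0 < ℓ t) :
    Injective fun e : ι ≃ Fin n => blockStart ℓ e := by
  intro e e' h
  have lt_iff (s t : ι) : e s < e t ↔ e' s < e' t := by
    rw [← blockStart_lt_blockStart_iff (hℓ s), ← blockStart_lt_blockStart_iff (a := e') (hℓ s)]
    exact iff_of_eq (congrArg (fun g : ι → ℕ => g s < g t) h)
  let shift : Fin n ≃o Fin n :=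
    StrictMono.orderIsoOfSurjective (e.symm.trans e')
      (fun i j hij => by simpa [← lt_iff] using hij) (e.symm.trans e').surjective
  refine Equiv.ext fun s => ?_
  have hshift : shift (e s) = e' s := congrArg e' (e.symm_apply_apply s)
  rw [← hshift, Subsingleton.elim shift (OrderIso.refl _), OrderIso.refl_apply]

theorem exists_equiv_fin_lt_iff_lt (ha : Injective a) :
    ∃ e : ι ≃ Fin (Fintype.card ι), ∀ s t, e s < e t ↔ a s < a t := by
  let : LinearOrder ι := LinearOrder.lift' a ha
  exact ⟨(Fintype.orderIsoFinOfCardEq ι rfl).symm.toEquiv,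
    fun s t => (Fintype.orderIsoFinOfCardEq ι rfl).symm.lt_iff_lt⟩

theorem ncard_setOf_isTiling (hℓ : ∀ t, 0 < ℓ t) :
    {f | IsTiling (∑ s, ℓ s) ℓ f}.ncard = (Fintype.card ι)! := by
  classical
  have hrange : Set.range (fun e : ι ≃ Fin (Fintype.card ι) => blockStart ℓ e) =
      {f | IsTiling (∑ s, ℓ s) ℓ f} := by
    ext f
    constructor
    · rintro ⟨e, rfl⟩
      exact isTiling_blockStart ℓ e.injective
    · intro h
      obtain ⟨e, he⟩ := exists_equiv_fin_lt_iff_lt (h.injective hℓ)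
      refine ⟨e, Eq.trans (funext fun t => ?_) (h.blockStart_eq hℓ)⟩
      simp only [blockStart, he]
  rw [← hrange, ← Nat.card_coe_set_eq, Nat.card_range_of_injective (blockStart_equiv_injective hℓ),
    Nat.card_eq_fintype_card, Fintype.card_equiv (Fintype.equivFin ι)]

end BlockStart

section Counting

variable {α β : Type*}

theorem card_filter_mem_of_injective [Fintype α] [DecidableEq β] {f : α → β} (hf : Injective f)
    {S T : Finset β} (hS : ∀ a, f a ∈ S) (hcard : #S ≤ Fintype.card α) (hT : T ⊆ S) :
    #{a | f a ∈ T} = #T := by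
  have himage : univ.image f = S :=
    eq_of_subset_of_card_le (image_subset_iff.2 fun a _ => hS a)
      (by rwa [card_image_of_injective _ hf, card_univ])
  rw [← card_image_of_injective _ hf, ← filter_image (p := (· ∈ T)), himage, filter_mem_eq_inter,
    inter_eq_right.2 hT]

theorem card_embedding_subtype_trans [Fintype α] [Fintype β]
    (hcard : Fintype.card α = Fintype.card β) (p : α → Prop) [DecidablePred p]
    (Q : ({a // p a} ↪ β) → Prop) :
    Nat.card {e : α ↪ β // Q ((Embedding.subtype p).trans e)} =
      Nat.card {g // Q g} * (Fintype.card {a // ¬ p a})! := by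
  classical
  let split : (α ↪ β) ≃ Σ g : {a // p a} ↪ β, {a // ¬ p a} ↪ ↥(Set.range g)ᶜ :=
    (Equiv.embeddingCongr (Equiv.sumCompl p).symm (Equiv.refl β)).trans
      Equiv.sumEmbeddingEquivSigmaEmbeddingRestricted
  have hsplit (e : α ↪ β) : (split e).1 = (Embedding.subtype p).trans e := rfl
  have hfiber (g : {a // p a} ↪ β) :
      Fintype.card ({a // ¬ p a} ↪ ↥(Set.range g)ᶜ) = (Fintype.card {a // ¬ p a})! := by
    have : Fintype.card ↥(Set.range g)ᶜ = Fintype.card {a // ¬ p a} := by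
      rw [Fintype.card_compl_set, Set.card_range_of_injective g.injective,
        Fintype.card_subtype_compl, hcard]
    rw [Fintype.card_embedding_eq, this, Nat.descFactorial_self]
  calc Nat.card {e : α ↪ β // Q ((Embedding.subtype p).trans e)}
      = Nat.card (Σ g : {g // Q g}, {a // ¬ p a} ↪ ↥(Set.range g.1)ᶜ) :=
        Nat.card_congr ((split.subtypeEquiv fun e => by rw [hsplit]).trans
          (Equiv.subtypeSigmaEquiv _ Q))
    _ = Nat.card {g // Q g} * (Fintype.card {a // ¬ p a})! := by
        simp [hfiber]

theorem ncard_setOf_injective_lt (n : ℕ) (Q : (α → ℕ) → Prop) :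
    {f : α → ℕ | Injective f ∧ (∀ a, f a < n) ∧ Q f}.ncard =
      Nat.card {e : α ↪ Fin n // Q fun a => e a} :=
  Nat.card_congr
    { toFun := fun f =>
        ⟨⟨fun a => ⟨f.1 a, f.2.2.1 a⟩, fun _ _ h => f.2.1 (Fin.ext_iff.1 h)⟩, f.2.2.2⟩
      invFun := fun e =>
        ⟨fun a => e.1 a, fun _ _ h => e.1.injective (Fin.ext h), fun a => (e.1 a).2, e.2⟩ }

end Counting

section Admissible

variable {ι : Type*} {n : ℕ} {r π : ι → ℕ}

/-- For an index type with `n` elements: `π` belongs to `S_n^0` and `π + r` belongs to `S_n`.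
Surjectivity is not recorded, since it follows from injectivity by cardinality. -/
structure IsAdmissible (n : ℕ) (r π : ι → ℕ) : Prop where
  injective : Injective π
  lt : ∀ i, π i < n
  injective_add : Injective fun i => π i + r i
  one_le_and_le : ∀ i, 1 ≤ π i + r i ∧ π i + r i ≤ n

theorem IsTiling.injective_add (h : IsTiling n r π) (hinj : Injective π) (hlt : ∀ i, π i < n) :
    Injective fun i => π i + r i := by
  -- An empty tile `t` at the right endpoint of a nonempty tile `s` would lie in a third tile `u`,
  -- which overlaps `s` because it starts before `t`.
  have add_ne {s t : ι} (hs : 0 < r s) (ht : r t = 0) : π s + r s ≠ π t := by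
    intro hst
    obtain ⟨u, hu, -⟩ := h.existsUnique_mem (π t) (hlt t)
    rw [mem_Ico] at hu
    have hut : π u ≠ π t := fun e => by
      rw [hinj e] at hu
      omega
    have hus : u = s := h.eq_of_mem (y := π t - 1) (mem_Ico.2 (by omega)) (mem_Ico.2 (by omega))
    subst hus
    omega
  intro s t hst
  simp only at hst
  rcases Nat.eq_zero_or_pos (r s) with hs | hs <;> rcases Nat.eq_zero_or_pos (r t) with ht | ht
  · exact hinj (by omega)
  · exact absurd (by omega) (add_ne ht hs)
  · exact absurd (by omega) (add_ne hs ht)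
  · exact h.eq_of_mem (y := π s + r s - 1) (mem_Ico.2 (by omega)) (mem_Ico.2 (by omega))

theorem IsTiling.isAdmissible (h : IsTiling n r π) (hinj : Injective π) (hlt : ∀ i, π i < n) :
    IsAdmissible n r π := by
  refine ⟨hinj, hlt, h.injective_add hinj hlt, fun i => ⟨?_, h.add_le i⟩⟩
  by_contra! hi
  obtain ⟨s, hs, -⟩ := h.existsUnique_mem (π i) (hlt i)
  rw [mem_Ico] at hs
  have hsi : s = i := hinj (by omega)
  subst hsi
  omega

variable [Fintype ι]

theorem IsAdmissible.card_filter_le (h : IsAdmissible n r π) (hn : Fintype.card ι = n) {y : ℕ}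
    (hy : y < n) : #{s | π s ≤ y} = y + 1 := by
  have := card_filter_mem_of_injective h.injective (S := range n) (T := range (y + 1))
    (fun s => mem_range.2 (h.lt s)) (by simp [hn]) (range_subset_range.2 hy)
  simpa only [mem_range, Order.lt_add_one_iff, card_range] using this

theorem IsAdmissible.card_filter_add_le (h : IsAdmissible n r π) (hn : Fintype.card ι = n) {y : ℕ}
    (hy : y ≤ n) : #{s | π s + r s ≤ y} = y := by
  have := card_filter_mem_of_injective h.injective_add (S := Icc 1 n) (T := Icc 1 y)
    (fun s => mem_Icc.2 (h.one_le_and_le s)) (by simp [hn]) (Icc_subset_Icc_right hy)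
  simpa only [mem_Icc, (h.one_le_and_le _).1, true_and, Nat.card_Icc, Nat.add_sub_cancel] using this

theorem IsAdmissible.isTiling (h : IsAdmissible n r π) (hn : Fintype.card ι = n) :
    IsTiling n r π := by
  classical
  refine ⟨fun s => (h.one_le_and_le s).2, fun y hy => ?_⟩
  have hsub : ({s | π s + r s ≤ y} : Finset ι) ⊆ ({s | π s ≤ y} : Finset ι) :=
    monotone_filter_right _ fun s _ hs => le_of_add_le_left hs
  have hcard : #(({s | π s ≤ y} : Finset ι) \ ({s | π s + r s ≤ y} : Finset ι)) = 1 := by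
    rw [card_sdiff_of_subset hsub, h.card_filter_le hn hy, h.card_filter_add_le hn hy.le,
      Nat.add_sub_cancel_left]
  obtain ⟨s, hs⟩ := card_eq_one.1 hcard
  have mem_iff (t : ι) : y ∈ Ico (π t) (π t + r t) ↔ t = s := by
    rw [← mem_singleton, ← hs]
    simp
  exact ⟨s, (mem_iff s).2 rfl, fun t => (mem_iff t).1⟩

theorem isAdmissible_iff_isTiling (hn : Fintype.card ι = n) :
    IsAdmissible n r π ↔ Injective π ∧ (∀ i, π i < n) ∧ IsTiling n r π :=
  ⟨fun h => ⟨h.injective, h.lt, h.isTiling hn⟩, fun ⟨hinj, hlt, h⟩ => h.isAdmissible hinj hlt⟩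

theorem ncard_setOf_isAdmissible (hn : Fintype.card ι = n) (hr : ∑ i, r i = n) :
    {π | IsAdmissible n r π}.ncard = (#{t | 0 < r t})! * (n - #{t | 0 < r t})! := by
  let κ := {t // 0 < r t}
  let ρ : κ → ℕ := fun t => r t
  have hρ : ∑ t, ρ t = n := by
    rw [← sum_subtype {t | 0 < r t} (fun t => mem_filter_univ t) r,
      sum_filter_of_ne fun _ _ h => Nat.pos_of_ne_zero h, hr]
  have hadm : {π | IsAdmissible n r π} =
      {π : ι → ℕ | Injective π ∧ (∀ i, π i < n) ∧ IsTiling n ρ fun t => π t} := by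
    ext π
    exact (isAdmissible_iff_isTiling hn).trans (and_congr_right fun _ => and_congr_right fun hlt =>
      (isTiling_subtype_pos_iff fun s => (hlt s).le).symm)
  have htil : {f | Injective f ∧ (∀ t, f t < n) ∧ IsTiling n ρ f} = {f | IsTiling n ρ f} := by
    ext f
    refine ⟨fun h => h.2.2, fun h => ⟨h.injective Subtype.property, fun t => ?_, h⟩⟩
    exact (Nat.lt_add_of_pos_right t.2).trans_le (h.add_le t)
  calc {π | IsAdmissible n r π}.ncard
      = Nat.card {e : ι ↪ Fin n // IsTiling n ρ fun t => e t} := by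
        rw [hadm, ncard_setOf_injective_lt n fun π : ι → ℕ => IsTiling n ρ fun t => π t]
    _ = Nat.card {g : κ ↪ Fin n // IsTiling n ρ fun t => g t} * (Fintype.card {t // ¬ 0 < r t})! :=
        card_embedding_subtype_trans (by simp [hn]) _ fun g : κ ↪ Fin n => IsTiling n ρ fun t => g t
    _ = (Fintype.card κ)! * (Fintype.card {t // ¬ 0 < r t})! := by
        rw [← ncard_setOf_injective_lt n (IsTiling n ρ), htil, ← hρ,
          ncard_setOf_isTiling fun t : κ => t.2]
    _ = (#{t | 0 < r t})! * (n - #{t | 0 < r t})! := by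
        rw [Fintype.card_subtype_compl, Fintype.card_subtype, hn]

end Admissible

section Sign

variable {ι α β : Type*} [Fintype ι] [LinearOrder α] [LinearOrder β]

/-- The inversions of `f`, the pairs counted by `bijSign`. -/
def inversions [LinearOrder ι] (f : ι → α) : Finset (ι × ι) :=
  {p | p.1 < p.2 ∧ f p.2 < f p.1}

/-- The pairs of indices that `f` and `g` put in opposite orders, each listed once: in the order
given by `f`. -/
def reversals (f : ι → α) (g : ι → β) : Finset (ι × ι) :=
  {p | f p.1 < f p.2 ∧ g p.2 < g p.1}

theorem card_inversions_add_card_inversions [LinearOrder ι] {f : ι → α} {g : ι → β}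
    (hf : Injective f) (hg : Injective g) :
    #(inversions f) + #(inversions g) =
      2 * #(inversions f ∩ inversions g) + #(reversals f g) := by
  have hlt : #{p ∈ reversals f g | p.1 < p.2} = #(inversions g \ inversions f) := by
    congr 1
    ext ⟨i, j⟩
    simp only [reversals, inversions, mem_filter, mem_sdiff, mem_univ, true_and]
    have := hf.ne_iff (x := i) (y := j)
    grind
  have hge : #{p ∈ reversals f g | ¬ p.1 < p.2} = #(inversions f \ inversions g) := by
    refine card_equiv (Equiv.prodComm ι ι) fun ⟨i, j⟩ => ?_
    simp only [reversals, inversions, mem_filter, mem_sdiff, mem_univ, true_and]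
    have := hg.ne_iff (x := i) (y := j)
    grind
  have hsplit := card_filter_add_card_filter_not (s := reversals f g) fun p => p.1 < p.2
  have hf_split := card_sdiff_add_card_inter (inversions f) (inversions g)
  have hg_split := card_sdiff_add_card_inter (inversions g) (inversions f)
  rw [inter_comm] at hg_split
  omega

theorem IsTiling.mem_reversals_iff {n : ℕ} {r π : ι → ℕ} (h : IsTiling n r π) (hinj : Injective π)
    {i j : ι} : (i, j) ∈ reversals π (fun t => π t + r t) ↔
      r j = 0 ∧ π j ∈ Ico (π i) (π i + r i) := by
  simp only [reversals, mem_filter_univ, mem_Ico]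
  constructor
  · rintro ⟨hlt, hlt_add⟩
    refine ⟨?_, by omega⟩
    by_contra hj
    have := h.add_le_of_lt (Nat.pos_of_ne_zero hj) hlt
    omega
  · rintro ⟨hj, hle, hlt⟩
    have hne : π i ≠ π j := fun e => by
      rw [hinj e] at hlt
      omega
    omega

theorem IsTiling.card_reversals {n : ℕ} {r π : ι → ℕ} (h : IsTiling n r π) (hinj : Injective π)
    (hlt : ∀ i, π i < n) : #(reversals π fun t => π t + r t) = #{t | ¬ 0 < r t} := by
  refine card_bij (fun p _ => p.2) ?_ ?_ ?_
  · rintro ⟨i, j⟩ hp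
    simpa using ((h.mem_reversals_iff hinj).1 hp).1
  · rintro ⟨i, j⟩ hp ⟨i', j'⟩ hp' rfl
    rw [h.eq_of_mem ((h.mem_reversals_iff hinj).1 hp).2 ((h.mem_reversals_iff hinj).1 hp').2]
  · intro j hj
    obtain ⟨i, hi, -⟩ := h.existsUnique_mem (π j) (hlt j)
    exact ⟨(i, j), (h.mem_reversals_iff hinj).2 ⟨by simpa using hj, hi⟩, rfl⟩

theorem IsAdmissible.neg_one_pow_card_inversions_mul [LinearOrder ι] {n : ℕ} {r π : ι → ℕ}
    (h : IsAdmissible n r π) (hn : Fintype.card ι = n) :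
    (-1 : ℤ) ^ #(inversions π) * (-1) ^ #(inversions fun i => π i + r i) =
      (-1) ^ (#{t | 0 < r t} + n) := by
  have hsplit : #{t | 0 < r t} + #(reversals π fun i => π i + r i) = n := by
    rw [(h.isTiling hn).card_reversals h.injective h.lt, card_filter_add_card_filter_not,
      card_univ, hn]
  rw [← pow_add, card_inversions_add_card_inversions h.injective h.injective_add,
    neg_one_pow_congr]
  simp only [← hsplit, Nat.even_add, even_two_mul]
  tauto

end Sign

/-- Elements of `S_d^0`: bijections from `{1,…,d}` (indexed by `Fin d`) onto `{0,…,d-1}`;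
`π + r ∈ S_d` means `fun i => π i + r i` is a bijection onto `{1,…,d}`. -/
theorem stmt16 (d : ℕ) (hd : 0 < d) (r : Fin d → ℕ) (hr : ∑ i, r i = d) :
    {π : Fin d → ℕ | Function.Injective π ∧ (∀ i, π i < d) ∧
        Function.Injective (fun i => π i + r i) ∧
        (∀ i, 1 ≤ π i + r i ∧ π i + r i ≤ d)}.ncard =
      Nat.factorial (Finset.univ.filter fun t => 0 < r t).card *
        Nat.factorial (d - (Finset.univ.filter fun t => 0 < r t).card) ∧
    ∀ π : Fin d → ℕ, Function.Injective π → (∀ i, π i < d) →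
      Function.Injective (fun i => π i + r i) →
      (∀ i, 1 ≤ π i + r i ∧ π i + r i ≤ d) →
      bijSign d π * bijSign d (fun i => π i + r i) =
        (-1) ^ ((Finset.univ.filter fun t => 0 < r t).card + d) := by
  refine ⟨?_, fun π hinj hlt hinj_add hmem =>
    IsAdmissible.neg_one_pow_card_inversions_mul ⟨hinj, hlt, hinj_add, hmem⟩ (Fintype.card_fin d)⟩
  rw [← ncard_setOf_isAdmissible (Fintype.card_fin d) hr]
  exact congrArg Set.ncard (Set.ext fun π =>
    ⟨fun ⟨hinj, hlt, hinj_add, hmem⟩ => ⟨hinj, hlt, hinj_add, hmem⟩,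
      fun h => ⟨h.injective, h.lt, h.injective_add, h.one_le_and_le⟩⟩)
end

section
/- Let d ≥ 2 be an integer such that d+1 is prime. Let G be a finite d-degenerate graph with vertex set {v_1, v_2, …, v_n}. Let r : {1,…,n} → Z≥0 satisfy Σ_{i=1}^n r(i) = d. Let L be a list assignment for G such that |L(v_i)| ≥ d + 1 − r(i) for 1 ≤ i ≤ n. Then G is L-colorable. -/
/-- `G` is `d`-degenerate: every subgraph of `G` (with at least one vertex)
has a vertex of degree at most `d`. -/
def Degenerate {V : Type*} (G : SimpleGraph V) (d : ℕ) : Prop :=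
  ∀ H : G.Subgraph, H.verts.Nonempty → ∃ v ∈ H.verts, (H.neighborSet v).ncard ≤ d

/-!
For a graph on `{0, …, n}` in which every vertex `i < n` has exactly `d` larger neighbours, counted
with multiplicity, let `P = ∏ (x_i - x_j)` be its graph polynomial. Over a ring of prime
characteristic `d + 1`, every homogeneous `M` of degree `d` satisfies
`[x_0 ^ d ⋯ x_n ^ d] (P * M) = M (1, …, 1)`: extracting `x_0 ^ d` turns `M` into a homogeneous
polynomial of degree `d` in the other variables with the same value at `(1, …, 1)`, because
`(x - 1) ^ d = 1 + x + ⋯ + x ^ d`. Taking for `M` the monomial with exponents `r` shows that `P` has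
coefficient `1` at the exponents `d - r i`, and the combinatorial Nullstellensatz applies. A
`d`-degenerate graph acquires the required shape after ordering its vertices and repeating edges.
-/

open Finset

section GeomSum

open Polynomial

lemma X_sub_one_pow_sub_one_eq_geom_sum {R : Type*} [Ring R] {p : ℕ} [Fact p.Prime]
    [CharP R p] :
    (X - 1 : R[X]) ^ (p - 1) = ∑ i ∈ range p, X ^ i := by
  have hp : ¬p ∣ 1 := (Fact.out : p.Prime).one_lt.not_ge ∘ Nat.le_of_dvd one_pos
  rw [← cyclotomic_prime, ← cyclotomic_one, ← cyclotomic_mul_prime_eq_pow_of_not_dvd R hp, one_mul]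

lemma coeff_geom_sum_mul {R : Type*} [Semiring R] {d : ℕ} {g : R[X]} (hg : g.natDegree ≤ d) :
    ((∑ i ∈ range (d + 1), X ^ i) * g).coeff d = g.eval 1 := by
  have hcoeff : ∀ i ∈ range (d + 1), (X ^ i * g).coeff d = g.coeff (d - i) := fun i hi ↦ by
    rw [coeff_X_pow_mul', if_pos (Nat.lt_succ_iff.1 (mem_range.1 hi))]
  have hreflect := sum_range_reflect g.coeff (d + 1)
  rw [sum_mul, finsetSum_coeff, sum_congr rfl hcoeff, eval_eq_sum_range' (Nat.lt_succ_of_le hg)]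
  simpa using hreflect

end GeomSum

section GraphPolynomial

open MvPolynomial

variable {R : Type*} [CommRing R] {n d : ℕ}

variable (R) in
/-- The graph polynomial of the multigraph on `Fin (n + 1)` in which every vertex `i < n` is joined
to `c i 0, …, c i (d - 1)`. Recording the edges by a function `c` allows repeated edges, which pad
all the vertices other than `n` to the same number `d` of listed neighbours. -/
noncomputable def graphPolynomial (c : Fin n → Fin d → Fin (n + 1)) :
    MvPolynomial (Fin (n + 1)) R :=
  ∏ i, ∏ k, (X i.castSucc - X (c i k))

lemma graphPolynomial_isHomogeneous (c : Fin n → Fin d → Fin (n + 1)) :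
    (graphPolynomial R c).IsHomogeneous (n * d) := by
  have h := IsHomogeneous.prod univ _ _ fun i _ ↦ IsHomogeneous.prod univ _ _ fun k _ ↦
    (isHomogeneous_X R i.castSucc).sub (isHomogeneous_X R (c i k))
  simpa [graphPolynomial] using h

lemma finSuccEquiv_graphPolynomial_succ (c : Fin (n + 1) → Fin d → Fin (n + 1)) :
    finSuccEquiv R (n + 1) (graphPolynomial R fun i k ↦ (c i k).succ) =
      Polynomial.C (graphPolynomial R fun i ↦ c i.succ) *
        finSuccEquiv R (n + 1) (∏ k, (X 0 - X (c 0 k).succ)) := by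
  simp [graphPolynomial, Fin.prod_univ_succ (n := n), finSuccEquiv_X_zero, finSuccEquiv_X_succ,
    mul_comm]

lemma apply_ne_of_eval_graphPolynomial_ne_zero {c : Fin n → Fin d → Fin (n + 1)}
    {x : Fin (n + 1) → R} (hx : eval x (graphPolynomial R c) ≠ 0) (i : Fin n) (k : Fin d) :
    x i.castSucc ≠ x (c i k) := by
  refine fun h ↦ hx ?_
  simp only [graphPolynomial, map_prod, map_sub, eval_X]
  exact prod_eq_zero (mem_univ i) (prod_eq_zero (mem_univ k) (sub_eq_zero.2 h))

lemma coeff_eq_eval_one_of_isHomogeneous {R σ : Type*} [CommSemiring R] [Unique σ]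
    {M : MvPolynomial σ R} {t : σ →₀ ℕ} (hM : M.IsHomogeneous t.degree) :
    M.coeff t = eval 1 M := by
  have hunique : ∀ s ∈ M.support, s ≠ t → M.coeff s = 0 := fun s hs hst ↦ by
    refine absurd (Finsupp.ext (Unique.forall_iff.2 ?_)) hst
    simpa [Finsupp.weight_apply, Finsupp.sum_fintype, Finsupp.degree_eq_sum] using
      hM (mem_support_iff.1 hs)
  simp only [eval_eq, Pi.one_apply, one_pow, prod_const_one, mul_one]
  exact (sum_eq_single t hunique notMem_support_iff.1).symm

lemma eval_one_coeff_finSuccEquiv_prod_X_zero_sub_mul [Fact (d + 1).Prime] [CharP R (d + 1)]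
    (a : Fin d → Fin n) {M : MvPolynomial (Fin (n + 1)) R} (hM : M.degreeOf 0 ≤ d) :
    eval 1 ((finSuccEquiv R n ((∏ k, (X 0 - X (a k).succ)) * M)).coeff d) = eval 1 M := by
  set g := (finSuccEquiv R n M).map (eval 1)
  have hdeg : g.natDegree ≤ d := Polynomial.natDegree_map_le.trans <| by
    rwa [natDegree_finSuccEquiv]
  have hgeom := X_sub_one_pow_sub_one_eq_geom_sum (R := R) (p := d + 1)
  calc
    eval 1 ((finSuccEquiv R n ((∏ k, (X 0 - X (a k).succ)) * M)).coeff d)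
    _ = ((Polynomial.X - 1) ^ d * g).coeff d := by
      rw [← Polynomial.coeff_map]
      simp [Polynomial.map_prod, finSuccEquiv_X_zero, finSuccEquiv_X_succ, g]
    _ = g.eval 1 := by
      rw [← coeff_geom_sum_mul hdeg, ← hgeom, Nat.add_sub_cancel]
    _ = eval 1 M := by
      rw [← eval_eq_eval_mv_eval']
      congr 2
      ext i
      cases i using Fin.cases <;> rfl

theorem coeff_graphPolynomial_mul [Fact (d + 1).Prime] [CharP R (d + 1)]
    {c : Fin n → Fin d → Fin (n + 1)} (hc : ∀ i k, i.castSucc < c i k)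
    {M : MvPolynomial (Fin (n + 1)) R} (hM : M.IsHomogeneous d) :
    (graphPolynomial R c * M).coeff (Finsupp.equivFunOnFinite.symm fun _ ↦ d) = eval 1 M := by
  induction n with
  | zero =>
    simpa [graphPolynomial] using coeff_eq_eval_one_of_isHomogeneous (R := R)
      (t := Finsupp.equivFunOnFinite.symm fun _ : Fin 1 ↦ d)
      (by simpa [Finsupp.degree_eq_sum] using hM)
  | succ n ih =>
    obtain ⟨c, rfl⟩ : ∃ c' : Fin (n + 1) → Fin d → Fin (n + 1), c = fun i k ↦ (c' i k).succ :=
      ⟨fun i k ↦ (c i k).pred (Fin.ne_zero_of_lt (hc i k)), by simp⟩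
    have hc' : ∀ (i : Fin n) k, i.castSucc < c i.succ k := fun i k ↦ by
      simpa [← Fin.succ_castSucc] using hc i.succ k
    let N := (∏ k, (X 0 - X (c 0 k).succ)) * M
    have hstar : (∏ k, (X 0 - X (c 0 k).succ) : MvPolynomial _ R).IsHomogeneous d := by
      simpa using IsHomogeneous.prod univ _ _ fun k _ ↦
        (isHomogeneous_X R 0).sub (isHomogeneous_X R (c 0 k).succ)
    have hN : ((finSuccEquiv R (n + 1) N).coeff d).IsHomogeneous d :=
      (hstar.mul hM).finSuccEquiv_coeff_isHomogeneous d d rfl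
    calc
      (graphPolynomial R (fun i k ↦ (c i k).succ) * M).coeff
            (Finsupp.equivFunOnFinite.symm fun _ ↦ d)
      _ = (graphPolynomial R (fun i ↦ c i.succ) * (finSuccEquiv R (n + 1) N).coeff d).coeff
            (Finsupp.equivFunOnFinite.symm fun _ ↦ d) := by
        rw [← Polynomial.coeff_C_mul, map_mul, ← mul_assoc, ← finSuccEquiv_graphPolynomial_succ,
          ← map_mul, finSuccEquiv_coeff_coeff]
        congr 1
        ext i
        cases i using Fin.cases <;> simp
      _ = eval 1 ((finSuccEquiv R (n + 1) N).coeff d) := ih hc' hN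
      _ = eval 1 M := eval_one_coeff_finSuccEquiv_prod_X_zero_sub_mul (c 0)
        ((degreeOf_le_totalDegree M 0).trans hM.totalDegree_le)

theorem coeff_graphPolynomial [Fact (d + 1).Prime] [CharP R (d + 1)]
    {c : Fin n → Fin d → Fin (n + 1)} (hc : ∀ i k, i.castSucc < c i k)
    {r : Fin (n + 1) →₀ ℕ} (hr : r.degree = d) :
    (graphPolynomial R c).coeff (Finsupp.equivFunOnFinite.symm (fun _ ↦ d) - r) = 1 := by
  have hle : r ≤ Finsupp.equivFunOnFinite.symm fun _ ↦ d :=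
    fun i ↦ (Finsupp.le_degree i r).trans_eq hr
  have h := coeff_graphPolynomial_mul (R := R) hc (isHomogeneous_monomial 1 hr)
  rw [← tsub_add_cancel_of_le hle, coeff_mul_monomial, mul_one] at h
  simpa [eval_monomial] using h

end GraphPolynomial

theorem exists_choice_of_forward_neighbors {α : Type*} {n d : ℕ} (hp : (d + 1).Prime)
    {c : Fin n → Fin d → Fin (n + 1)} (hc : ∀ i k, i.castSucc < c i k)
    {r : Fin (n + 1) → ℕ} (hr : ∑ i, r i = d)
    {L : Fin (n + 1) → Finset α} (hL : ∀ i, d + 1 - r i ≤ #(L i)) :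
    ∃ φ : Fin (n + 1) → α, (∀ i, φ i ∈ L i) ∧ ∀ i k, φ i.castSucc ≠ φ (c i k) := by
  have : Fact (d + 1).Prime := ⟨hp⟩
  let ρ : Fin (n + 1) →₀ ℕ := Finsupp.equivFunOnFinite.symm r
  let t : Fin (n + 1) →₀ ℕ := Finsupp.equivFunOnFinite.symm (fun _ ↦ d) - ρ
  -- The colors are made algebraically independent elements of a domain of characteristic `d + 1`.
  let K := MvPolynomial α (ZMod (d + 1))
  let color : α ↪ K := ⟨MvPolynomial.X, MvPolynomial.X_injective⟩
  have hcoeff : (graphPolynomial K c).coeff t ≠ 0 := by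
    rw [coeff_graphPolynomial hc (by simpa [ρ, Finsupp.degree_eq_sum] using hr)]
    exact one_ne_zero
  have hdeg : (graphPolynomial K c).totalDegree = t.degree := by
    have hhom := graphPolynomial_isHomogeneous (R := K) c
    rw [hhom.totalDegree (MvPolynomial.ne_zero_iff.2 ⟨t, hcoeff⟩), Finsupp.degree_eq_weight_one]
    exact (hhom hcoeff).symm
  have hcard : ∀ i, t i < #((L i).map color) := fun i ↦ by
    have hri : r i ≤ d := hr ▸ single_le_sum_of_canonicallyOrdered (mem_univ i)
    have hLi := hL i
    simp only [t, ρ, card_map, Finsupp.tsub_apply, Finsupp.equivFunOnFinite_symm_apply_apply]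
    lia
  obtain ⟨x, hxL, hx⟩ := MvPolynomial.combinatorial_nullstellensatz_exists_eval_nonzero
    _ t hcoeff hdeg _ hcard
  simp only [mem_map] at hxL
  choose φ hφL hφ using hxL
  refine ⟨φ, hφL, fun i k h ↦ apply_ne_of_eval_graphPolynomial_ne_zero hx i k ?_⟩
  rw [← hφ, ← hφ, h]

lemma exists_subset_range_of_ncard_le {α : Type*} {s : Set α} {d : ℕ} (hd : s.ncard ≤ d)
    (hs : s.Finite) (a : α) : ∃ f : Fin d → α, s ⊆ Set.range f ∧ Set.range f ⊆ insert a s := by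
  lift s to Finset α using hs
  rw [Set.ncard_coe_finset, ← length_toList] at hd
  refine ⟨fun k ↦ s.toList.getD k a, fun x hx ↦ ?_, ?_⟩
  · obtain ⟨k, hk, rfl⟩ := List.mem_iff_getElem.1 (mem_toList.2 hx)
    exact ⟨⟨k, hk.trans_le hd⟩, List.getD_eq_getElem _ _ hk⟩
  · rintro _ ⟨k, rfl⟩
    obtain hk | hk := lt_or_ge k.1 s.toList.length
    · exact .inr (mem_toList.1 (by simp only [List.getD_eq_getElem _ a hk, List.getElem_mem]))
    · exact .inl (List.getD_eq_default _ a hk)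

namespace Degenerate

variable {V W : Type*} {G : SimpleGraph V} {d n : ℕ}

lemma comap (hG : Degenerate G d) (f : W ↪ V) : Degenerate (G.comap f) d := by
  intro H ⟨w, hw⟩
  let H' : G.Subgraph := H.map (SimpleGraph.Embedding.comap f G).toHom
  obtain ⟨_, ⟨v, hv, rfl⟩, hvd⟩ := hG H' ⟨f w, w, hw, rfl⟩
  have himage : H'.neighborSet (f v) = f '' H.neighborSet v := by
    ext u
    simp [H', Relation.Map]
  refine ⟨v, hv, ?_⟩
  rwa [← Set.ncard_image_of_injective _ f.injective, ← himage]

lemma exists_ncard_neighborSet_le [Nonempty V] (hG : Degenerate G d) :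
    ∃ v, (G.neighborSet v).ncard ≤ d := by
  obtain ⟨v, -, hv⟩ := hG ⊤ Set.univ_nonempty
  exact ⟨v, hv⟩

theorem exists_perm_forward_degree_le {G : SimpleGraph (Fin n)} (hG : Degenerate G d) :
    ∃ σ : Equiv.Perm (Fin n), ∀ i, {j | i < j ∧ G.Adj (σ i) (σ j)}.ncard ≤ d := by
  induction n with
  | zero => exact ⟨1, fun i ↦ i.elim0⟩
  | succ n ih =>
    obtain ⟨v, hv⟩ := hG.exists_ncard_neighborSet_le
    obtain ⟨τ, hτ⟩ := ih (hG.comap ((Fin.succEmb n).trans (Equiv.swap 0 v).toEmbedding))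
    let σ := Equiv.Perm.decomposeFin.symm (v, τ)
    refine ⟨σ, Fin.cases ?_ fun i ↦ ?_⟩
    · refine le_trans (Set.ncard_le_ncard_of_injOn σ ?_ σ.injective.injOn) hv
      rintro j ⟨-, hj⟩
      simpa [σ] using hj
    · have hsucc : {j | i.succ < j ∧ G.Adj (σ i.succ) (σ j)} = Fin.succ ''
          {j | i < j ∧ G.Adj (Equiv.swap 0 v (τ i).succ) (Equiv.swap 0 v (τ j).succ)} := by
        ext j
        cases j using Fin.cases <;> simp [σ]
      rw [hsucc, Set.ncard_image_of_injective _ (Fin.succ_injective n)]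
      exact hτ i

theorem exists_equiv_forward_degree_le [Fintype V] (hG : Degenerate G d)
    (hn : Fintype.card V = n) :
    ∃ e : Fin n ≃ V, ∀ i, {j | i < j ∧ G.Adj (e i) (e j)}.ncard ≤ d := by
  let e := (Fintype.equivFinOfCardEq hn).symm
  obtain ⟨σ, hσ⟩ := (hG.comap e.toEmbedding).exists_perm_forward_degree_le
  exact ⟨σ.trans e, hσ⟩

theorem exists_equiv_forward_neighbors [Fintype V] (hG : Degenerate G d)
    (hn : Fintype.card V = n + 1) :
    ∃ (e : Fin (n + 1) ≃ V) (c : Fin n → Fin d → Fin (n + 1)),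
      (∀ i k, i.castSucc < c i k) ∧
      ∀ i j, i.castSucc < j → G.Adj (e i.castSucc) (e j) → ∃ k, c i k = j := by
  obtain ⟨e, he⟩ := hG.exists_equiv_forward_degree_le hn
  have hcover (i : Fin n) : ∃ f : Fin d → Fin (n + 1), (∀ k, i.castSucc < f k) ∧
      ∀ j, i.castSucc < j → G.Adj (e i.castSucc) (e j) → ∃ k, f k = j := by
    obtain ⟨f, hf, hf'⟩ := exists_subset_range_of_ncard_le (he i.castSucc) (Set.toFinite _)
      (Fin.last n)
    refine ⟨f, fun k ↦ ?_, fun j hij hadj ↦ hf ⟨hij, hadj⟩⟩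
    obtain hk | hk := hf' (Set.mem_range_self k)
    · exact hk ▸ i.castSucc_lt_last
    · exact hk.1
  choose c hc hadj using hcover
  exact ⟨e, c, hc, hadj⟩

end Degenerate

theorem stmt17_general {V α : Type*} [Fintype V] {d : ℕ} (hp : (d + 1).Prime)
    {G : SimpleGraph V} (hG : Degenerate G d) {r : V → ℕ} (hr : ∑ v, r v = d)
    {L : V → Finset α} (hL : ∀ v, d + 1 - r v ≤ #(L v)) :
    ∃ C : G.Coloring α, ∀ v, C v ∈ L v := by
  have : Nonempty V := by
    by_contra! hV
    exact hp.one_lt.ne (by simp [← hr])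
  obtain ⟨n, hn⟩ := Nat.exists_eq_succ_of_ne_zero (Fintype.card_ne_zero (α := V))
  obtain ⟨e, c, hc, hadj⟩ := hG.exists_equiv_forward_neighbors hn
  obtain ⟨φ, hφL, hφ⟩ := exists_choice_of_forward_neighbors hp hc
    ((e.sum_comp r).trans hr) (fun i ↦ hL (e i))
  have hne_of_lt : ∀ i j, i < j → G.Adj (e i) (e j) → φ i ≠ φ j := fun i j hij h ↦ by
    obtain ⟨i, rfl⟩ := Fin.exists_castSucc_eq.2 (Fin.ne_last_of_lt hij)
    obtain ⟨k, rfl⟩ := hadj i j hij h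
    exact hφ i k
  have hne : ∀ i j, G.Adj (e i) (e j) → φ i ≠ φ j := fun i j h ↦ by
    obtain hij | rfl | hji := lt_trichotomy i j
    · exact hne_of_lt i j hij h
    · exact absurd rfl h.ne
    · exact (hne_of_lt j i hji h.symm).symm
  exact ⟨.mk (φ ∘ e.symm) fun {u v} h ↦ hne _ _ (by simpa using h),
    fun v ↦ e.apply_symm_apply v ▸ hφL (e.symm v)⟩

theorem stmt17 (d n : ℕ) (hd : 2 ≤ d) (hp : Nat.Prime (d + 1))
    (G : SimpleGraph (Fin n)) (hdeg : Degenerate G d)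
    (r : Fin n → ℕ) (hr : ∑ i, r i = d)
    (L : Fin n → Finset ℕ) (hL : ∀ i, d + 1 - r i ≤ (L i).card) :
    ∃ φ : Fin n → ℕ, IsLColoring G L φ := by
  obtain ⟨C, hC⟩ := stmt17_general hp hdeg hr hL
  exact ⟨C, hC, fun _ _ h ↦ C.valid h⟩
end
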